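/- Let 0 < q < 1 (real) and m ≥ 1. Then □(q)^{4m(m+1)} = (2^{m(2m+1)} / Π_{i=1}^{2m} i!) · det_{1≤i,j≤m}( t_{i+j} + 4·(−1)^{i+j} · Σ_{k=1}^∞ q^k k^{2i+2j−1}/(1 − (−q)^k) ), where each inner series converges absolutely (note 1 − (−q)^k ≥ 1 − q > 0). -/

import Mathlib

/-- The generating function `□(q) = Σ_{n∈ℤ} q^{n²}` for sums of squares. -/
noncomputable def sqGen (q : ℝ) : ℝ := ∑' n : ℤ, q ^ (n.natAbs ^ 2)
/-- The tangent numbers `t_n = (4^n − 1)|B_{2n}|/n`, so that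
`tan(x/2) = Σ_{n≥1} t_n x^{2n−1}/(2n−1)!`. -/
noncomputable def tangentNum (n : ℕ) : ℝ :=
  ((4 : ℝ) ^ n - 1) * |((bernoulli (2 * n) : ℚ) : ℝ)| / n

/-!
For `p = -q`, let `P` be the Lambert expansion at a half period of the Weierstrass function of nome
`√p`, normalised so that `P'' = 6 P² + b P + c`. Up to signs and factors `2`, the entries of the
Hankel matrix are the derivatives of even order of `P` at the origin. The differential equation is
an identity between Lambert series, which follows from
`u_k u_l = u_{k+l} (1 + u_k + u_l)` for `u_k = p^k / (1 - p^k)`.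

Put `V = P - P(0)`, so that `V'' = 6 V² + b V + 2 a` with `a = P''(0) / 2` and `V(0) = V'(0) = 0`.
Then `d² / dX²` maps each power of `V` to a combination of the neighbouring powers. For such a
tridiagonal operator the Hankel matrix of moments is a product of a lower and an upper triangular
matrix, and its determinant is a product of off-diagonal coefficients: here, of factorials and
powers of `a`.

It remains to show that `a = □(q)⁸ / 16`. The value of the differential equation at the origin gives
the relations between Lambert series by which Jacobi's series `f(q) = 1 + 8 ∑ (σ(n) - 4 σ(n/4)) qⁿ`
satisfies `f(q) + f(-q) = 4 f(q²) - 2 f(-q²)` and `f(q) f(-q) = f(-q²)²`, and by which `16 a = f²`.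
The function `□⁴` satisfies the same two equations, and an analytic solution of them is determined
by `f(0)` and `f'(0) ≠ 0`, so that `f = □⁴`.
-/

open Finset Submodule PowerSeries

section TridiagonalHankel

variable {R E : Type*} [CommRing R] [AddCommGroup E] [Module R E]
  {L : E →ₗ[R] E} {v : ℕ → E} {up d lo : ℕ → R}

lemma map_mem_span_range_succ (h0 : L (v 0) = 0)
    (hL : ∀ n, L (v (n + 1)) = up n • v (n + 2) + d n • v (n + 1) + lo n • v n)
    {i : ℕ} {x : E} (hx : x ∈ span R (v '' range i)) : L x ∈ span R (v '' range (i + 1)) := by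
  have hv {n : ℕ} (hn : n < i + 1) : v n ∈ span R (v '' range (i + 1)) :=
    subset_span ⟨n, by simpa using hn, rfl⟩
  refine span_le (p := (span R (v '' range (i + 1))).comap L) |>.2 ?_ hx
  rintro _ ⟨n, hn, rfl⟩
  replace hn : n < i := by simpa using hn
  cases n with
  | zero => simp [h0]
  | succ n =>
    simp only [comap_coe, Set.mem_preimage, SetLike.mem_coe, hL]
    exact add_mem (add_mem (smul_mem _ _ (hv (by lia))) (smul_mem _ _ (hv (by lia))))
      (smul_mem _ _ (hv (by lia)))

lemma pow_apply_sub_prod_smul_mem_span (h0 : L (v 0) = 0)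
    (hL : ∀ n, L (v (n + 1)) = up n • v (n + 2) + d n • v (n + 1) + lo n • v n) (i : ℕ) :
    (L ^ i) (v 1) - (∏ k ∈ range i, up k) • v (i + 1) ∈ span R (v '' range (i + 1)) := by
  have hv {n i : ℕ} (hn : n < i) : v n ∈ span R (v '' range i) :=
    subset_span ⟨n, by simpa using hn, rfl⟩
  induction i with
  | zero => simp
  | succ i ih =>
    have hsplit : (L ^ (i + 1)) (v 1) - (∏ k ∈ range (i + 1), up k) • v (i + 2) =
        L ((L ^ i) (v 1) - (∏ k ∈ range i, up k) • v (i + 1)) +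
          (∏ k ∈ range i, up k) • (d i • v (i + 1) + lo i • v i) := by
      rw [pow_succ', Module.End.mul_apply, map_sub, map_smul, hL, prod_range_succ]
      module
    rw [hsplit]
    exact add_mem (map_mem_span_range_succ h0 hL ih) (smul_mem _ _ (add_mem
      (smul_mem _ _ (hv (by lia))) (smul_mem _ _ (hv (by lia)))))

variable {φ : E →ₗ[R] R}

lemma apply_pow_apply_eq_zero_of_lt (hφ : ∀ n, φ (v (n + 1)) = 0)
    (hL : ∀ n, L (v (n + 1)) = up n • v (n + 2) + d n • v (n + 1) + lo n • v n)
    {j n : ℕ} (hjn : j < n) : φ ((L ^ j) (v n)) = 0 := by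
  induction j generalizing n with
  | zero =>
    obtain ⟨n, rfl⟩ := Nat.exists_eq_succ_of_ne_zero hjn.ne'
    exact hφ n
  | succ j ih =>
    obtain ⟨n, rfl⟩ := Nat.exists_eq_succ_of_ne_zero (Nat.ne_zero_of_lt hjn)
    simp [pow_succ, hL, ih (n := n) (by lia), ih (n := n + 1) (by lia), ih (n := n + 2) (by lia)]

lemma apply_pow_apply_self (hφ0 : φ (v 0) = 1) (hφ : ∀ n, φ (v (n + 1)) = 0)
    (hL : ∀ n, L (v (n + 1)) = up n • v (n + 2) + d n • v (n + 1) + lo n • v n) (j : ℕ) :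
    φ ((L ^ j) (v j)) = ∏ k ∈ range j, lo k := by
  induction j with
  | zero => simpa using hφ0
  | succ j ih =>
    have h1 := apply_pow_apply_eq_zero_of_lt hφ hL (Nat.lt_add_one j)
    have h2 := apply_pow_apply_eq_zero_of_lt hφ hL (show j < j + 2 by lia)
    simp [pow_succ, hL, h1, h2, ih, prod_range_succ, mul_comm]

lemma exists_pow_apply_eq_sum (h0 : L (v 0) = 0)
    (hL : ∀ n, L (v (n + 1)) = up n • v (n + 2) + d n • v (n + 1) + lo n • v n) (i : ℕ) :
    ∃ c : ℕ → R, (∀ n, i < n → c n = 0) ∧ c i = ∏ k ∈ range i, up k ∧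
      ∀ j m, i < m → (L ^ (i + j + 1)) (v 1) = ∑ n ∈ range m, c n • (L ^ (j + 1)) (v (n + 1)) := by
  obtain ⟨b, hb, hbv⟩ := (Finsupp.mem_span_image_iff_linearCombination R).1
    (pow_apply_sub_prod_smul_mem_span h0 hL i)
  rw [Finsupp.linearCombination_apply_of_mem_supported R hb, eq_sub_iff_add_eq] at hbv
  let c (n : ℕ) : R := if n < i then b (n + 1) else if n = i then ∏ k ∈ range i, up k else 0
  have hc (n : ℕ) (hn : i < n) : c n = 0 := by simp [c, hn.not_gt, hn.ne']
  refine ⟨c, hc, by simp [c], fun j m hm => ?_⟩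
  have hLv0 : (L ^ (j + 1)) (v 0) = 0 := by simp [pow_succ, h0]
  have htail : ∀ n ∈ range m, n ∉ range (i + 1) → c n • (L ^ (j + 1)) (v (n + 1)) = 0 :=
    fun n _ hn => by rw [hc n (by simpa using hn), zero_smul]
  rw [add_assoc, add_comm, pow_add, Module.End.mul_apply, ← hbv,
    ← sum_subset (range_subset_range.2 hm) htail, sum_range_succ', sum_range_succ]
  simp only [map_add, map_sum, map_smul, hLv0, smul_zero, add_zero]
  congr 1
  · refine sum_congr rfl fun n hn => ?_
    simp [c, mem_range.1 hn]
  · simp [c]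

theorem det_hankel_of_tridiagonal (h0 : L (v 0) = 0)
    (hL : ∀ n, L (v (n + 1)) = up n • v (n + 2) + d n • v (n + 1) + lo n • v n)
    (hφ0 : φ (v 0) = 1) (hφ : ∀ n, φ (v (n + 1)) = 0) (m : ℕ) :
    (Matrix.of fun i j : Fin m => φ ((L ^ (i + j + 1 : ℕ)) (v 1))).det =
      ∏ i ∈ range m, ((∏ k ∈ range i, up k) * ∏ k ∈ range (i + 1), lo k) := by
  choose c hc hci hcv using exists_pow_apply_eq_sum h0 hL
  have hfactor : (Matrix.of fun i j : Fin m => φ ((L ^ (i + j + 1 : ℕ)) (v 1))) =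
      (Matrix.of fun i n : Fin m => c i n) *
        Matrix.of fun n j : Fin m => φ ((L ^ (j + 1 : ℕ)) (v (n + 1))) := by
    ext i j
    simp only [Matrix.mul_apply, Matrix.of_apply, hcv i j m i.is_lt, map_sum, map_smul, smul_eq_mul,
      sum_range]
  rw [hfactor, Matrix.det_mul, Matrix.det_of_isLowerTriangular, Matrix.det_of_isUpperTriangular,
    prod_mul_distrib, prod_range, prod_range]
  · simp [hci, apply_pow_apply_self hφ0 hφ hL]
  · exact fun i j hij => apply_pow_apply_eq_zero_of_lt hφ hL (by simpa using hij)
  · exact fun i n hin => hc i n (by simpa using hin)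

end TridiagonalHankel

section QuadraticODE

lemma prod_range_eq_factorial_two_mul_add_one {R : Type*} [CommSemiring R] (n : ℕ) :
    ∏ k ∈ range n, (2 * (k + 1) * (2 * k + 3) : R) = (2 * n + 1).factorial := by
  induction n with
  | zero => simp
  | succ n ih =>
    rw [prod_range_succ, ih, show 2 * (n + 1) + 1 = 2 * n + 1 + 1 + 1 by ring]
    simp only [Nat.factorial_succ]
    push_cast
    ring

lemma prod_range_eq_factorial_two_mul {R : Type*} [CommSemiring R] (a : R) (n : ℕ) :
    ∏ k ∈ range n, ((2 * k + 1) * (2 * k + 2) * a) = (2 * n).factorial * a ^ n := by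
  induction n with
  | zero => simp
  | succ n ih =>
    rw [prod_range_succ, ih, show 2 * (n + 1) = 2 * n + 1 + 1 by ring]
    simp only [Nat.factorial_succ]
    push_cast
    ring

variable {R : Type*} [CommRing R] [IsAddTorsionFree R] {a b : R} {V : R⟦X⟧}

lemma derivative_sq_of_quadratic_ode (h0 : constantCoeff V = 0) (h1 : coeff 1 V = 0)
    (hV : d⁄dX R (d⁄dX R V) = 6 * V ^ 2 + C b * V + C (2 * a)) :
    (d⁄dX R V) ^ 2 = 4 * V ^ 3 + C b * V ^ 2 + C (4 * a) * V := by
  have h4 : d⁄dX R (4 : R⟦X⟧) = 0 := mod_cast Derivation.map_natCast (d⁄dX R) 4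
  apply derivative.ext
  · simp only [Derivation.leibniz, derivative_pow, hV, map_add, derivative_C, h4, smul_eq_mul,
      map_mul, map_ofNat]
    push_cast
    ring
  · have : constantCoeff (d⁄dX R V) = 0 := by
      rw [← coeff_zero_eq_constantCoeff_apply, coeff_derivative]
      simp [h1]
    simp [this, h0]

lemma derivative_derivative_pow_of_quadratic_ode (h0 : constantCoeff V = 0) (h1 : coeff 1 V = 0)
    (hV : d⁄dX R (d⁄dX R V) = 6 * V ^ 2 + C b * V + C (2 * a)) (n : ℕ) :
    d⁄dX R (d⁄dX R (V ^ (n + 1))) = (2 * (n + 1) * (2 * n + 3) : R) • V ^ (n + 2) +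
      ((n + 1) ^ 2 * b) • V ^ (n + 1) + ((2 * n + 1) * (2 * n + 2) * a) • V ^ n := by
  have hsq := derivative_sq_of_quadratic_ode h0 h1 hV
  have hn : d⁄dX R (n : R⟦X⟧) = 0 := Derivation.map_natCast ..
  rw [map_mul, map_ofNat] at hV hsq
  simp only [derivative_pow, Derivation.leibniz, hV, hn, smul_eq_mul, Nat.add_sub_cancel,
    Nat.cast_add, Nat.cast_one, map_add, Derivation.map_one_eq_zero, smul_eq_C_mul, map_mul,
    map_pow, map_natCast, map_ofNat, map_one]
  cases n with
  | zero => simp; ring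
  | succ n =>
    simp only [Nat.add_sub_cancel]
    push_cast
    linear_combination ((n + 2) * (n + 1) * V ^ n : R⟦X⟧) * hsq

theorem det_hankel_of_quadratic_ode (h0 : constantCoeff V = 0) (h1 : coeff 1 V = 0)
    (hV : d⁄dX R (d⁄dX R V) = 6 * V ^ 2 + C b * V + C (2 * a)) (m : ℕ) :
    (Matrix.of fun i j : Fin m =>
      ((2 * (i + j + 1 : ℕ)).factorial : R) * coeff (2 * (i + j + 1 : ℕ)) V).det =
      ∏ i ∈ range m, ((2 * i + 1).factorial * (2 * i + 2).factorial * a ^ (i + 1) : R) := by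
  let L : R⟦X⟧ →ₗ[R] R⟦X⟧ := (d⁄dX R : R⟦X⟧ →ₗ[R] R⟦X⟧) ^ 2
  have hL (f : R⟦X⟧) : L f = d⁄dX R (d⁄dX R f) := by simp [L, pow_two]
  have hentry (k : ℕ) : ((2 * k).factorial : R) * coeff (2 * k) V = coeff 0 ((L ^ k) (V ^ 1)) := by
    rw [← constantCoeff_iterate_derivative, ← pow_mul, Module.End.pow_apply, pow_one]
    exact (coeff_zero_eq_constantCoeff_apply _).symm
  simp only [hentry]
  rw [det_hankel_of_tridiagonal (v := fun n => V ^ n)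
    (by simp [hL]) (fun n => by rw [hL, derivative_derivative_pow_of_quadratic_ode h0 h1 hV])
    (by simp) (by simp [h0])]
  refine prod_congr rfl fun i _ => ?_
  rw [prod_range_eq_factorial_two_mul_add_one, prod_range_eq_factorial_two_mul, mul_assoc]
  rfl

end QuadraticODE

section FormalSeries

/-- The power series of `-e^X`. -/
noncomputable def altExp : ℝ⟦X⟧ := -exp ℝ

/-- The power series of `-e^(-X)`, the inverse of `altExp`. -/
noncomputable def altExpInv : ℝ⟦X⟧ := -rescale (-1) (exp ℝ)

/-- The power series of `(-1)^k * 2 cosh (k X)`. -/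
noncomputable def altCosh (k : ℕ) : ℝ⟦X⟧ := altExp ^ k + altExpInv ^ k

/-- The power series of `1 / (1 + e^X)`. -/
noncomputable def fermi : ℝ⟦X⟧ := (1 + exp ℝ)⁻¹

/-- The power series of `-e^X / (1 + e^X)^2`, the derivative of `fermi`. It is the degenerate case
`p = 0` of `ellipticP p`. -/
noncomputable def trigP : ℝ⟦X⟧ := fermi ^ 2 - fermi

lemma altExp_mul_altExpInv : altExp * altExpInv = 1 := by
  simpa [altExp, altExpInv] using exp_mul_exp_eq_exp_add (A := ℝ) 1 (-1)

lemma altCosh_zero : altCosh 0 = 2 := by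
  rw [altCosh, pow_zero, pow_zero, one_add_one_eq_two]

lemma altCosh_mul (k l : ℕ) : altCosh k * altCosh l = altCosh (k + l) + altCosh (Nat.dist k l) := by
  wlog h : l ≤ k generalizing k l
  · rw [mul_comm, this l k (le_of_not_ge h), add_comm l, Nat.dist_comm]
  obtain ⟨d, rfl⟩ := Nat.exists_eq_add_of_le h
  have hl : altExp ^ l * altExpInv ^ l = 1 := by rw [← mul_pow, altExp_mul_altExpInv, one_pow]
  rw [Nat.dist_eq_sub_of_le_right h, Nat.add_sub_cancel_left]
  simp only [altCosh, pow_add]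
  linear_combination (altExp ^ d + altExpInv ^ d) * hl

lemma coeff_altCosh (k n : ℕ) :
    coeff n (altCosh k) = (-1) ^ k * ((k : ℝ) ^ n + (-k : ℝ) ^ n) / n.factorial := by
  have hz : altExp ^ k = (-1 : ℝ) ^ k • rescale (k : ℝ) (exp ℝ) := by
    rw [altExp, neg_pow, exp_pow_eq_rescale_exp, Algebra.smul_def]
    simp
  have hw : altExpInv ^ k = (-1 : ℝ) ^ k • rescale (-k : ℝ) (exp ℝ) := by
    rw [altExpInv, neg_pow, ← map_pow, exp_pow_eq_rescale_exp, Algebra.smul_def, rescale_rescale]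
    simp
  rw [altCosh, hz, hw]
  simp only [map_add, coeff_smul, coeff_rescale, coeff_exp, smul_eq_mul]
  simp only [one_div, map_inv₀, map_natCast]
  ring

lemma derivative_derivative_altCosh (k : ℕ) :
    d⁄dX ℝ (d⁄dX ℝ (altCosh k)) = (k : ℝ) ^ 2 • altCosh k := by
  ext n
  have : (n.factorial : ℝ) ≠ 0 := by positivity
  simp only [coeff_derivative, coeff_altCosh, map_smul, smul_eq_mul, Nat.factorial_succ]
  push_cast
  field_simp
  ring

lemma fermi_mul_one_sub_altExp : fermi * (1 - altExp) = 1 := by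
  rw [altExp, sub_neg_eq_add]
  exact PowerSeries.inv_mul_cancel _ (by simp)

lemma trigP_mul_altCosh_one_sub_two : trigP * (altCosh 1 - 2) = 1 := by
  have hW := fermi_mul_one_sub_altExp
  calc trigP * (altCosh 1 - 2)
      = fermi ^ 2 * (altExp * (altCosh 1 - 2)) := by
        rw [trigP]; linear_combination fermi * (altCosh 1 - 2) * hW
    _ = (fermi * (1 - altExp)) ^ 2 := by
        rw [altCosh, pow_one, pow_one]
        linear_combination fermi ^ 2 * altExp_mul_altExpInv
    _ = 1 := by rw [hW, one_pow]

lemma derivative_fermi : d⁄dX ℝ fermi = trigP := by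
  have hW := fermi_mul_one_sub_altExp
  rw [altExp] at hW
  rw [trigP]
  conv_lhs => rw [fermi, derivative_inv', map_add, derivative_one, derivative_exp, ← fermi]
  linear_combination -fermi * hW

lemma derivative_derivative_trigP : d⁄dX ℝ (d⁄dX ℝ trigP) = 6 * trigP ^ 2 + trigP := by
  have h2 : d⁄dX ℝ (2 : ℝ⟦X⟧) = 0 := mod_cast Derivation.map_natCast (d⁄dX ℝ) 2
  have h1 : d⁄dX ℝ trigP = (2 * fermi - 1) * trigP := by
    conv_lhs => rw [trigP, map_sub, derivative_pow, derivative_fermi]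
    push_cast
    ring
  rw [h1, Derivation.leibniz, h1, map_sub, Derivation.leibniz, derivative_fermi, derivative_one, h2]
  simp only [smul_eq_mul, trigP]
  ring

lemma coeff_trigP (n : ℕ) :
    coeff n trigP = (1 - 2 ^ (n + 2)) * (bernoulli (n + 2) : ℚ) / ((n + 2) * n.factorial) := by
  set B := bernoulliPowerSeries ℝ with hBdef
  have hB : B * (exp ℝ - 1) = X := bernoulliPowerSeries_mul_exp_sub_one ℝ
  have hB2 : rescale 2 B * (exp ℝ ^ 2 - 1) = 2 * X := by
    have h := congrArg (rescale (2 : ℝ)) hB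
    rw [map_mul, map_sub, map_one, rescale_X] at h
    simpa [exp_pow_eq_rescale_exp, map_ofNat C 2] using h
  have hne : exp ℝ - 1 ≠ 0 := fun h => by
    simpa [coeff_exp, coeff_one] using congrArg (coeff 1) h
  have hsum : (B - rescale 2 B) * (exp ℝ + 1) = X := by
    apply mul_right_cancel₀ hne
    linear_combination (exp ℝ + 1) * hB - hB2
  have hXW : fermi * X = B - rescale 2 B := by
    have hW := fermi_mul_one_sub_altExp
    rw [altExp] at hW
    linear_combination (-fermi) * hsum + (B - rescale 2 B) * hW
  have hcoeff : coeff (n + 1) fermi = coeff (n + 2) (B - rescale 2 B) := by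
    rw [← hXW, coeff_succ_mul_X]
  rw [← derivative_fermi, coeff_derivative, hcoeff]
  have : (n.factorial : ℝ) ≠ 0 := by positivity
  simp only [hBdef, bernoulliPowerSeries, map_div₀, eq_ratCast, map_natCast, map_sub, coeff_mk,
    coeff_rescale, Nat.factorial_succ, Nat.cast_mul, Nat.cast_add, Nat.cast_one]
  field_simp
  ring

/-- The Fejér sum `∑_{|j| < k} (k - |j|) c_|j|` of a sequence. -/
def fejerSum {E : Type*} [AddCommGroup E] [Module ℝ E] (c : ℕ → E) (k : ℕ) : E :=
  (2 : ℝ) • ∑ j ∈ range k, ((k : ℝ) - j) • c j - (k : ℝ) • c 0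

section fejerSum

variable {E : Type*} [AddCommGroup E] [Module ℝ E] (c : ℕ → E)

lemma fejerSum_add_two (k : ℕ) :
    fejerSum c (k + 2) = (2 : ℝ) • fejerSum c (k + 1) - fejerSum c k + (2 : ℝ) • c (k + 1) := by
  have h (k : ℕ) : ∑ j ∈ range (k + 1), (((k + 1 : ℕ) : ℝ) - j) • c j =
      ∑ j ∈ range k, ((k : ℝ) - j) • c j + ∑ j ∈ range (k + 1), c j := by
    rw [show ∑ j ∈ range k, ((k : ℝ) - j) • c j = ∑ j ∈ range (k + 1), ((k : ℝ) - j) • c j by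
      simp [sum_range_succ], ← sum_add_distrib]
    refine sum_congr rfl fun j _ => ?_
    push_cast
    module
  simp only [fejerSum, h (k + 1), h k, sum_range_succ _ (k + 1)]
  push_cast
  module

lemma map_fejerSum {F : Type*} [AddCommGroup F] [Module ℝ F] (f : E →ₗ[ℝ] F) (k : ℕ) :
    f (fejerSum c k) = fejerSum (fun j => f (c j)) k := by
  simp [fejerSum]

end fejerSum

lemma two_mul_trigP_mul_altCosh_sub (k : ℕ) :
    2 * trigP * (altCosh k - 2) = fejerSum altCosh k := by
  have h1 := trigP_mul_altCosh_one_sub_two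
  induction k using Nat.twoStepInduction with
  | zero => simp [fejerSum, altCosh_zero]
  | one =>
    simp only [fejerSum, range_one, sum_singleton, altCosh_zero, smul_eq_C_mul]
    simp only [Nat.cast_one, Nat.cast_zero, sub_zero, map_one, one_mul, map_ofNat]
    linear_combination 2 * h1
  | more k ih ih' =>
    have hmul : altCosh (k + 1) * altCosh 1 = altCosh (k + 2) + altCosh k := by
      rw [altCosh_mul, Nat.dist_eq_sub_of_le_right (by lia), Nat.add_sub_cancel]
    rw [fejerSum_add_two, ← ih, ← ih', smul_eq_C_mul, smul_eq_C_mul, map_ofNat]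
    linear_combination (-2 * trigP) * hmul + (2 * altCosh (k + 1)) * h1

end FormalSeries

section DoubleSums

lemma hasSum_sum_antidiagonal {E : Type*} [AddCommGroup E] [UniformSpace E] [IsUniformAddGroup E]
    [T3Space E] {f : ℕ × ℕ → E} {s : E} (hf : HasSum f s) :
    HasSum (fun n => ∑ a ∈ antidiagonal n, f a) s := by
  refine ((HasAntidiagonal.sigmaAntidiagonalEquivProd (A := ℕ)).hasSum_iff.2 hf).sigma fun n => ?_
  rw [← sum_coe_sort]
  exact hasSum_fintype _

lemma tsum_eq_two_mul_tsum_sub_tsum_diag {f : ℕ × ℕ → ℝ} (hf : Summable f)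
    (hswap : ∀ k l, f (l, k) = f (k, l)) :
    ∑' a, f a = 2 * ∑' a : ℕ × ℕ, f (a.1 + a.2, a.2) - ∑' k, f (k, k) := by
  let g (a : ℕ × ℕ) : ℕ × ℕ := (a.1 + a.2, a.2)
  let h (a : ℕ × ℕ) : ℕ × ℕ := (a.2, a.1 + 1 + a.2)
  have hg : g.Injective := fun a b hab => by
    simp only [g, Prod.mk.injEq] at hab
    ext <;> lia
  have hh : h.Injective := fun a b hab => by
    simp only [h, Prod.mk.injEq] at hab
    ext <;> lia
  have hrange : Set.range h = (Set.range g)ᶜ := by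
    ext ⟨k, l⟩
    simp only [g, h, Set.mem_range, Set.mem_compl_iff, Prod.exists, Prod.mk.injEq]
    constructor
    · rintro ⟨j, l, rfl, rfl⟩ ⟨j', l', h1, h2⟩
      lia
    · intro hkl
      have : k < l := by
        by_contra hlk
        exact hkl ⟨k - l, l, by lia, rfl⟩
      exact ⟨l - k - 1, k, rfl, by lia⟩
  have hfg : Summable fun a => f (g a) := hf.comp_injective hg
  have hfh : Summable fun a => f (h a) := hf.comp_injective hh
  have hshift : ∑' a, f (g a) = ∑' l, f (l, l) + ∑' a, f (h a) := by
    rw [hfg.tsum_prod, hfg.prod.tsum_eq_zero_add, hfh.tsum_prod]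
    congr 1
    · simp [g]
    · exact tsum_congr fun j => tsum_congr fun l => hswap _ _
  have hsplit : ∑' a, f (g a) + ∑' a, f (h a) = ∑' a, f a := by
    rw [← tsum_range f hg, ← tsum_range f hh, hrange]
    exact (hf.subtype _).tsum_add_tsum_compl (hf.subtype _)
  linarith

end DoubleSums

section Lambert

/-- `F` grows at most polynomially in the degree `w`. -/
def PolynomialGrowth {ι : Type*} (w : ι → ℕ) (F : ι → ℝ) : Prop :=
  ∃ (B : ℝ) (r : ℕ), ∀ a, |F a| ≤ B * (w a + 1) ^ r

namespace PolynomialGrowth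

variable {ι : Type*} {w : ι → ℕ} {F G : ι → ℝ}

lemma of_abs_le {B : ℝ} (hF : ∀ a, |F a| ≤ B) : PolynomialGrowth w F :=
  ⟨B, 0, by simpa using hF⟩

lemma natCast {d : ι → ℕ} (hd : ∀ a, d a ≤ w a) : PolynomialGrowth w fun a => (d a : ℝ) := by
  refine ⟨1, 1, fun a => ?_⟩
  have : (d a : ℝ) ≤ w a := mod_cast hd a
  simpa using this.trans (le_add_of_nonneg_right zero_le_one)

lemma mul (hF : PolynomialGrowth w F) (hG : PolynomialGrowth w G) :
    PolynomialGrowth w fun a => F a * G a := by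
  obtain ⟨B, r, hF⟩ := hF
  obtain ⟨B', r', hG⟩ := hG
  refine ⟨B * B', r + r', fun a => ?_⟩
  calc |F a * G a| ≤ (B * (w a + 1) ^ r) * (B' * (w a + 1) ^ r') := by
        rw [abs_mul]
        exact mul_le_mul (hF a) (hG a) (abs_nonneg _) ((abs_nonneg _).trans (hF a))
    _ = _ := by ring

lemma pow (hF : PolynomialGrowth w F) (r : ℕ) : PolynomialGrowth w fun a => F a ^ r := by
  induction r with
  | zero => exact of_abs_le (B := 1) (by simp)
  | succ r ih => simpa only [pow_succ] using ih.mul hF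

lemma comp {κ : Type*} {v : κ → ℕ} (hF : PolynomialGrowth w F) {d : κ → ι}
    (hd : ∀ a, w (d a) ≤ v a) : PolynomialGrowth v fun a => F (d a) := by
  obtain ⟨B, r, hF⟩ := hF
  refine ⟨|B|, r, fun a => (hF _).trans ?_⟩
  have : (w (d a) : ℝ) ≤ v a := mod_cast hd a
  gcongr
  exact le_abs_self B

lemma summable_mul_pow {F : ℕ → ℝ} (hF : PolynomialGrowth id F) {p : ℝ} (hp : |p| < 1) :
    Summable fun k => F k * p ^ k := by
  obtain ⟨B, r, hF⟩ := hF
  have hu : (fun k : ℕ => (((k + 1) ^ r : ℕ) : ℝ)) =O[Filter.atTop] fun k => ((k ^ r : ℕ) : ℝ) := by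
    refine .of_bound (2 ^ r) ?_
    filter_upwards [Filter.eventually_ge_atTop 1] with k hk
    have hk : (k : ℝ) + 1 ≤ 2 * k := by
      have : (1 : ℝ) ≤ k := mod_cast hk
      linarith
    push_cast
    rw [Real.norm_of_nonneg (by positivity), Real.norm_of_nonneg (by positivity), ← mul_pow]
    gcongr
  refine .of_norm_bounded ((summable_norm_mul_geometric_of_norm_lt_one (r := p) hp hu).mul_left |B|)
    fun k => ?_
  rw [norm_mul, norm_mul, ← mul_assoc]
  gcongr
  refine (hF k).trans ?_
  push_cast
  rw [Real.norm_of_nonneg (by positivity)]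
  gcongr
  exacts [le_abs_self B, le_rfl]

lemma summable_mul_pow_add {F : ℕ × ℕ → ℝ} (hF : PolynomialGrowth (fun a => a.1 + a.2) F) {p : ℝ}
    (hp : |p| < 1) : Summable fun a : ℕ × ℕ => F a * p ^ (a.1 + a.2) := by
  obtain ⟨B, r, hF⟩ := hF
  have h1 : Summable fun k : ℕ => ((k : ℝ) + 1) ^ r * |p| ^ k :=
    summable_mul_pow ⟨1, r, fun k => by simp [abs_of_nonneg (by positivity : (0 : ℝ) ≤ k + 1)]⟩
      (by rwa [abs_abs])
  refine .of_norm_bounded ((h1.mul_of_nonneg h1 (fun k => by positivity)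
    fun k => by positivity).mul_left |B|) fun a => ?_
  have hdeg : ((a.1 + a.2 : ℕ) + 1 : ℝ) ≤ (a.1 + 1) * (a.2 + 1) := by
    push_cast
    nlinarith [(mul_nonneg a.1.cast_nonneg a.2.cast_nonneg : (0 : ℝ) ≤ a.1 * a.2)]
  calc ‖F a * p ^ (a.1 + a.2)‖ = |F a| * |p| ^ (a.1 + a.2) := by simp
    _ ≤ |B| * ((a.1 + 1) * (a.2 + 1)) ^ r * |p| ^ (a.1 + a.2) := by
        gcongr
        exact (hF a).trans (by gcongr; exact le_abs_self B)
    _ = _ := by rw [mul_pow, pow_add]; ring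

end PolynomialGrowth

/-- The general term `k^r p^k / (1 - p^k)` of a Lambert series; it vanishes at `k = 0`, where the
denominator does. -/
noncomputable def lambertTerm (p : ℝ) (r k : ℕ) : ℝ := k ^ r * (p ^ k / (1 - p ^ k))

/-- The Lambert series `∑_{k ≥ 1} k^r p^k / (1 - p^k)`. -/
noncomputable def lambertSum (p : ℝ) (r : ℕ) : ℝ := ∑' k, lambertTerm p r k

section lambertTerm

variable {p : ℝ}

@[simp]
lemma lambertTerm_zero (p : ℝ) (r : ℕ) : lambertTerm p r 0 = 0 := by simp [lambertTerm]

lemma natCast_pow_mul_lambertTerm (p : ℝ) (s r k : ℕ) :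
    (k : ℝ) ^ s * lambertTerm p r k = lambertTerm p (s + r) k := by
  simp only [lambertTerm]
  ring

lemma natCast_mul_lambertTerm (p : ℝ) (r k : ℕ) :
    k * lambertTerm p r k = lambertTerm p (r + 1) k := by
  simp only [lambertTerm]
  ring

lemma abs_pow_lt_one (hp : |p| < 1) {k : ℕ} (hk : k ≠ 0) : |p ^ k| < 1 := by
  rw [abs_pow]
  exact pow_lt_one₀ (abs_nonneg p) hp hk

lemma one_sub_pow_ne_zero (hp : |p| < 1) {k : ℕ} (hk : k ≠ 0) : 1 - p ^ k ≠ 0 := by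
  linarith [(abs_lt.1 (abs_pow_lt_one hp hk)).2]

lemma lambertTerm_mul_lambertTerm (hp : |p| < 1) {k l : ℕ} (hk : k ≠ 0) (hl : l ≠ 0) :
    lambertTerm p 0 k * lambertTerm p 0 l =
      lambertTerm p 0 (k + l) * (1 + lambertTerm p 0 k + lambertTerm p 0 l) := by
  have h1 := one_sub_pow_ne_zero hp hk
  have h2 := one_sub_pow_ne_zero hp hl
  have h3 := one_sub_pow_ne_zero hp (k := k + l) (by lia)
  rw [pow_add] at h3
  simp only [lambertTerm, pow_add]
  field_simp
  ring

lemma exists_lambertTerm_eq_mul_pow (hp : |p| < 1) (r : ℕ) :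
    ∃ g : ℕ → ℝ, PolynomialGrowth id g ∧ ∀ k, lambertTerm p r k = g k * p ^ k := by
  have hinv (k : ℕ) : |(1 - p ^ k)⁻¹| ≤ (1 - |p|)⁻¹ := by
    have : 0 < 1 - |p| := sub_pos.2 hp
    rcases eq_or_ne k 0 with rfl | hk
    · simpa using hp.le
    · rw [abs_inv]
      gcongr
      have h1 : |p ^ k| ≤ |p| := by
        rw [abs_pow]
        exact pow_le_of_le_one (abs_nonneg p) hp.le hk
      linarith [le_abs_self (p ^ k), le_abs_self (1 - p ^ k)]
  refine ⟨fun k => k ^ r * (1 - p ^ k)⁻¹,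
    ((PolynomialGrowth.natCast fun _ => le_rfl).pow r).mul (.of_abs_le hinv), fun k => ?_⟩
  rw [lambertTerm]
  ring

lemma polynomialGrowth_lambertTerm (hp : |p| < 1) (r : ℕ) :
    PolynomialGrowth id (lambertTerm p r) := by
  obtain ⟨g, hg, hgk⟩ := exists_lambertTerm_eq_mul_pow hp r
  rw [funext hgk]
  exact hg.mul (.of_abs_le fun k => by simpa using pow_le_one₀ (abs_nonneg p) hp.le)

lemma summable_lambertTerm_mul (hp : |p| < 1) (r : ℕ) {F : ℕ → ℝ}
    (hF : PolynomialGrowth id F) :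
    Summable fun k => lambertTerm p r k * F k := by
  obtain ⟨g, hg, hgk⟩ := exists_lambertTerm_eq_mul_pow hp r
  refine ((hg.mul hF).summable_mul_pow hp).congr fun k => ?_
  rw [hgk, mul_right_comm]

lemma summable_lambertTerm (hp : |p| < 1) (r : ℕ) : Summable (lambertTerm p r) := by
  simpa using summable_lambertTerm_mul hp r (F := fun _ => 1) (.of_abs_le (B := 1) (by simp))

lemma summable_lambertTerm_sq (hp : |p| < 1) (r : ℕ) : Summable fun k => lambertTerm p r k ^ 2 := by
  refine (summable_lambertTerm_mul hp r (polynomialGrowth_lambertTerm hp r)).congr fun k => ?_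
  rw [pow_two]

lemma summable_lambertTerm_add_mul (hp : |p| < 1) (r : ℕ) {F : ℕ × ℕ → ℝ}
    (hF : PolynomialGrowth (fun a => a.1 + a.2) F) :
    Summable fun a : ℕ × ℕ => lambertTerm p r (a.1 + a.2) * F a := by
  obtain ⟨g, hg, hgk⟩ := exists_lambertTerm_eq_mul_pow hp r
  refine (((hg.comp fun _ => le_rfl).mul hF).summable_mul_pow_add hp).congr fun a => ?_
  rw [hgk, mul_right_comm]

lemma summable_lambertTerm_mul_lambertTerm_mul (hp : |p| < 1) (r : ℕ) {F : ℕ × ℕ → ℝ}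
    (hF : PolynomialGrowth (fun a => a.1 + a.2) F) :
    Summable fun a : ℕ × ℕ => lambertTerm p r a.1 * lambertTerm p r a.2 * F a := by
  obtain ⟨g, hg, hgk⟩ := exists_lambertTerm_eq_mul_pow hp r
  refine ((((hg.comp fun a => Nat.le_add_right a.1 a.2).mul
    (hg.comp fun a => Nat.le_add_left a.2 a.1)).mul hF).summable_mul_pow_add hp).congr fun a => ?_
  rw [hgk, hgk]
  ring

end lambertTerm

end Lambert

section KeyIdentity

variable {p : ℝ} {c : ℕ → ℝ}

lemma summable_lambertTerm_add_mul_natCast_mul (hp : |p| < 1) (r : ℕ)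
    (hc : PolynomialGrowth id c) :
    Summable fun a : ℕ × ℕ => lambertTerm p r (a.1 + a.2) * (a.2 * c a.1) :=
  summable_lambertTerm_add_mul hp r <|
    .mul (.natCast (d := Prod.snd) fun a => Nat.le_add_left a.2 a.1)
      (hc.comp (d := Prod.fst) fun a => Nat.le_add_right a.1 a.2)

lemma summable_lambertTerm_add_mul_lambertTerm_mul (hp : |p| < 1) (r : ℕ)
    (hc : PolynomialGrowth id c) :
    Summable fun a : ℕ × ℕ => lambertTerm p r (a.1 + a.2) * (lambertTerm p r a.2 * c a.1) :=
  summable_lambertTerm_add_mul hp r <|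
    .mul ((polynomialGrowth_lambertTerm hp r).comp (d := Prod.snd) fun a => Nat.le_add_left a.2 a.1)
      (hc.comp (d := Prod.fst) fun a => Nat.le_add_right a.1 a.2)

lemma summable_lambertTerm_mul_lambertTerm_mul_add (hp : |p| < 1) (r : ℕ)
    (hc : PolynomialGrowth id c) :
    Summable fun a : ℕ × ℕ => lambertTerm p r a.1 * lambertTerm p r a.2 * c (a.1 + a.2) :=
  summable_lambertTerm_mul_lambertTerm_mul hp r <|
    hc.comp (d := fun a : ℕ × ℕ => a.1 + a.2) fun _ => le_rfl

lemma summable_lambertTerm_mul_lambertTerm_mul_dist (hp : |p| < 1) (r : ℕ)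
    (hc : PolynomialGrowth id c) :
    Summable fun a : ℕ × ℕ => lambertTerm p r a.1 * lambertTerm p r a.2 * c (Nat.dist a.1 a.2) :=
  summable_lambertTerm_mul_lambertTerm_mul hp r <|
    hc.comp (d := fun a : ℕ × ℕ => Nat.dist a.1 a.2) fun a => by simp only [Nat.dist, id]; lia

lemma hasSum_lambertTerm_mul_fejerSum (hp : |p| < 1) (r : ℕ) (hc : PolynomialGrowth id c) :
    HasSum (fun k => lambertTerm p r k * fejerSum c k)
      (2 * ∑' a : ℕ × ℕ, lambertTerm p r (a.1 + a.2) * (a.2 * c a.1) -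
        c 0 * lambertSum p (r + 1)) := by
  have hs := summable_lambertTerm_add_mul_natCast_mul hp r hc
  refine (((hasSum_sum_antidiagonal hs.hasSum).mul_left 2).sub
    ((summable_lambertTerm hp (r + 1)).hasSum.mul_left (c 0))).congr_fun fun k => ?_
  have hk : ∑ a ∈ antidiagonal k, lambertTerm p r (a.1 + a.2) * (a.2 * c a.1) =
      lambertTerm p r k * ∑ j ∈ range k, ((k : ℝ) - j) * c j := by
    rw [Nat.sum_antidiagonal_eq_sum_range_succ_mk, sum_range_succ, Nat.sub_self, Nat.cast_zero,
      zero_mul, mul_zero, add_zero, mul_sum]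
    refine sum_congr rfl fun j hj => ?_
    have hj : j ≤ k := (mem_range.1 hj).le
    rw [Nat.cast_sub hj, Nat.add_sub_cancel' hj]
  rw [hk, ← natCast_mul_lambertTerm]
  simp only [fejerSum, smul_eq_mul]
  ring

lemma tsum_lambertTerm_mul_lambertTerm_mul_dist (hp : |p| < 1) (r : ℕ)
    (hc : PolynomialGrowth id c) :
    ∑' a : ℕ × ℕ, lambertTerm p r a.1 * lambertTerm p r a.2 * c (Nat.dist a.1 a.2) =
      2 * ∑' a : ℕ × ℕ, lambertTerm p r (a.1 + a.2) * (lambertTerm p r a.2 * c a.1) -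
        c 0 * ∑' k, lambertTerm p r k ^ 2 := by
  have hs := summable_lambertTerm_mul_lambertTerm_mul_dist hp r hc
  rw [tsum_eq_two_mul_tsum_sub_tsum_diag hs, ← tsum_mul_left (a := c 0)]
  · congr 1
    · congr 1
      refine tsum_congr fun a => ?_
      rw [Nat.dist_eq_sub_of_le_right (Nat.le_add_left _ _), Nat.add_sub_cancel]
      ring
    · refine tsum_congr fun k => ?_
      rw [Nat.dist_self]
      ring
  · intro k l
    rw [Nat.dist_comm, mul_comm (lambertTerm p r l)]

lemma hasSum_mul_sum_antidiagonal_lambertTerm (hp : |p| < 1) (r : ℕ) (hc : PolynomialGrowth id c) :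
    HasSum (fun n => c n * ∑ a ∈ antidiagonal n, lambertTerm p r a.1 * lambertTerm p r a.2)
      (∑' a : ℕ × ℕ, lambertTerm p r a.1 * lambertTerm p r a.2 * c (a.1 + a.2)) := by
  have hs := summable_lambertTerm_mul_lambertTerm_mul_add hp r hc
  refine (hasSum_sum_antidiagonal hs.hasSum).congr_fun fun n => ?_
  rw [mul_sum]
  refine sum_congr rfl fun a ha => ?_
  rw [HasAntidiagonal.mem_antidiagonal.1 ha, mul_comm]

/-- The convolution `∑_{k + l = n} k l p^k / (1 - p^k)`, through which both kinds of quadratic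
Lambert sums are expressed. -/
noncomputable def lambertConv (p : ℝ) (n : ℕ) : ℝ :=
  ∑ a ∈ antidiagonal n, a.2 * lambertTerm p 1 a.1

lemma sum_antidiagonal_natCast_mul (n : ℕ) :
    ∑ a ∈ antidiagonal n, (a.1 : ℝ) * a.2 = n * (n ^ 2 - 1) / 6 := by
  induction n with
  | zero => simp
  | succ n ih =>
    have hsum : ∑ a ∈ antidiagonal n, (a.1 : ℝ) = n * (n + 1) / 2 := by
      have h : ((∑ k ∈ range (n + 1), k : ℕ) : ℝ) * 2 = (n + 1) * n :=
        mod_cast sum_range_id_mul_two (n + 1)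
      rw [Nat.sum_antidiagonal_eq_sum_range_succ_mk, ← Nat.cast_sum]
      linarith
    rw [Nat.sum_antidiagonal_succ']
    simp only [Nat.cast_add, Nat.cast_one, mul_add, mul_one, sum_add_distrib, ih, hsum]
    push_cast
    ring

lemma sum_antidiagonal_lambertTerm_mul (hp : |p| < 1) (n : ℕ) :
    ∑ a ∈ antidiagonal n, lambertTerm p 1 a.1 * lambertTerm p 1 a.2 =
      lambertTerm p 0 n * (n * (n ^ 2 - 1) / 6 + 2 * lambertConv p n) := by
  have hterm : ∀ a ∈ antidiagonal n, lambertTerm p 1 a.1 * lambertTerm p 1 a.2 = lambertTerm p 0 n *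
      (a.1 * a.2 + (a.2 * lambertTerm p 1 a.1 + a.1 * lambertTerm p 1 a.2)) := by
    rintro ⟨k, l⟩ h
    rw [HasAntidiagonal.mem_antidiagonal] at h
    subst h
    simp only [← natCast_mul_lambertTerm p 0]
    rcases eq_or_ne k 0 with rfl | hk
    · simp
    rcases eq_or_ne l 0 with rfl | hl
    · simp
    linear_combination (k * l : ℝ) * lambertTerm_mul_lambertTerm hp hk hl
  have hswap : ∑ a ∈ antidiagonal n, a.1 * lambertTerm p 1 a.2 = lambertConv p n :=
    (Nat.sum_antidiagonal_swap).symm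
  rw [sum_congr rfl hterm, ← mul_sum, sum_add_distrib, sum_add_distrib, hswap,
    sum_antidiagonal_natCast_mul, ← lambertConv]
  ring

lemma tsum_lambertTerm_add_mul (hp : |p| < 1) {n : ℕ} (hn : n ≠ 0) :
    ∑' l, lambertTerm p 1 (n + l) * (l + lambertTerm p 1 l) =
      lambertTerm p 0 n * (2 * n * lambertSum p 1 - lambertConv p n) := by
  have h1 := summable_lambertTerm hp 1
  have h2 := summable_lambertTerm hp 2
  have h3 : Summable fun k : ℕ => (k - n : ℝ) * lambertTerm p 1 k := by
    refine (h2.sub (h1.mul_left (n : ℝ))).congr fun k => ?_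
    rw [← natCast_mul_lambertTerm]
    ring
  have hshift : ∑' l : ℕ, ((l + n : ℕ) - n : ℝ) * lambertTerm p 1 (l + n) =
      lambertSum p 2 - n * lambertSum p 1 + lambertConv p n := by
    have hconv : ∑ k ∈ range n, (k - n : ℝ) * lambertTerm p 1 k = -lambertConv p n := by
      rw [lambertConv, Nat.sum_antidiagonal_eq_sum_range_succ_mk, sum_range_succ, Nat.sub_self,
        Nat.cast_zero, zero_mul, add_zero, ← sum_neg_distrib]
      refine sum_congr rfl fun k hk => ?_
      rw [Nat.cast_sub (mem_range.1 hk).le]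
      ring
    have htotal : ∑' k : ℕ, (k - n : ℝ) * lambertTerm p 1 k =
        lambertSum p 2 - n * lambertSum p 1 := by
      rw [lambertSum, lambertSum, ← tsum_mul_left, ← h2.tsum_sub (h1.mul_left _)]
      refine tsum_congr fun k => ?_
      rw [← natCast_mul_lambertTerm p 1]
      ring
    linarith [h3.sum_add_tsum_nat_add n]
  have hterm (l : ℕ) : lambertTerm p 1 (n + l) * (l + lambertTerm p 1 l) = lambertTerm p 0 n *
      (lambertTerm p 2 l + n * lambertTerm p 1 l -
        ((l + n : ℕ) - n : ℝ) * lambertTerm p 1 (l + n)) := by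
    rw [add_comm l n, ← natCast_mul_lambertTerm p 1]
    simp only [← natCast_mul_lambertTerm p 0]
    rcases eq_or_ne l 0 with rfl | hl
    · simp
    push_cast
    linear_combination (-(l : ℝ) * (n + l)) * lambertTerm_mul_lambertTerm hp hn hl
  rw [tsum_congr hterm, tsum_mul_left, (h2.add (h1.mul_left _)).tsum_sub
    ((summable_nat_add_iff n).2 h3), h2.tsum_add (h1.mul_left _), tsum_mul_left, hshift,
    ← lambertSum, ← lambertSum]
  ring

lemma hasSum_mul_tsum_lambertTerm_add_mul (hp : |p| < 1) (r : ℕ) (hc : PolynomialGrowth id c) :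
    HasSum (fun n => c n * ∑' l, lambertTerm p r (n + l) * (l + lambertTerm p r l))
      (∑' a : ℕ × ℕ, lambertTerm p r (a.1 + a.2) * (a.2 * c a.1) +
        ∑' a : ℕ × ℕ, lambertTerm p r (a.1 + a.2) * (lambertTerm p r a.2 * c a.1)) := by
  have hs := (summable_lambertTerm_add_mul_natCast_mul hp r hc).hasSum.add
    (summable_lambertTerm_add_mul_lambertTerm_mul hp r hc).hasSum
  refine (hs.prod_fiberwise fun n => (hs.summable.prod_factor n).hasSum).congr_fun fun n => ?_
  rw [← tsum_mul_left]
  exact tsum_congr fun l => by ring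

theorem one_sub_lambertSum_mul_tsum_lambertTerm (hp : |p| < 1) (hc : PolynomialGrowth id c) :
    (1 - 24 * lambertSum p 1) * ∑' k, lambertTerm p 1 k * c k -
        6 * c 0 * (lambertSum p 2 + ∑' k, lambertTerm p 1 k ^ 2) =
      ∑' k, lambertTerm p 3 k * c k - 6 * ∑' k, lambertTerm p 1 k * fejerSum c k -
        6 * ∑' a : ℕ × ℕ, lambertTerm p 1 a.1 * lambertTerm p 1 a.2 *
          (c (a.1 + a.2) + c (Nat.dist a.1 a.2)) := by
  have h2 := summable_lambertTerm hp 2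
  have hsq := summable_lambertTerm_sq hp 1
  have hdouble : ∑' a : ℕ × ℕ, lambertTerm p 1 a.1 * lambertTerm p 1 a.2 *
      (c (a.1 + a.2) + c (Nat.dist a.1 a.2)) =
      ∑' a : ℕ × ℕ, lambertTerm p 1 a.1 * lambertTerm p 1 a.2 * c (a.1 + a.2) +
      ∑' a : ℕ × ℕ, lambertTerm p 1 a.1 * lambertTerm p 1 a.2 * c (Nat.dist a.1 a.2) := by
    rw [← (summable_lambertTerm_mul_lambertTerm_mul_add hp 1 hc).tsum_add
      (summable_lambertTerm_mul_lambertTerm_mul_dist hp 1 hc)]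
    exact tsum_congr fun a => mul_add _ _ _
  have hcoeff (n : ℕ) (hn : n ≠ 0) : lambertTerm p 3 n * c n -
      12 * (c n * ∑' l, lambertTerm p 1 (n + l) * (l + lambertTerm p 1 l)) -
      6 * (c n * ∑ a ∈ antidiagonal n, lambertTerm p 1 a.1 * lambertTerm p 1 a.2) -
      (1 - 24 * lambertSum p 1) * (lambertTerm p 1 n * c n) = 0 := by
    rw [tsum_lambertTerm_add_mul hp hn, sum_antidiagonal_lambertTerm_mul hp,
      ← natCast_pow_mul_lambertTerm p 3 0, ← natCast_mul_lambertTerm p 0]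
    ring
  have hzero : ∑' l, lambertTerm p 1 (0 + l) * (l + lambertTerm p 1 l) =
      lambertSum p 2 + ∑' k, lambertTerm p 1 k ^ 2 := by
    rw [lambertSum, ← h2.tsum_add hsq]
    refine tsum_congr fun l => ?_
    rw [zero_add, ← natCast_mul_lambertTerm p 1]
    ring
  have hsum := ((((summable_lambertTerm_mul hp 3 hc).hasSum.sub
    ((hasSum_mul_tsum_lambertTerm_add_mul hp 1 hc).mul_left 12)).sub
    ((hasSum_mul_sum_antidiagonal_lambertTerm hp 1 hc).mul_left 6)).sub
    ((summable_lambertTerm_mul hp 1 hc).hasSum.mul_left (1 - 24 * lambertSum p 1))).unique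
    (hasSum_single 0 hcoeff)
  rw [hzero, HasAntidiagonal.antidiagonal_zero, sum_singleton, lambertTerm_zero,
    lambertTerm_zero] at hsum
  rw [hdouble, tsum_lambertTerm_mul_lambertTerm_mul_dist hp 1 hc,
    (hasSum_lambertTerm_mul_fejerSum hp 1 hc).tsum_eq]
  linear_combination -hsum

end KeyIdentity

section EllipticP

variable {p : ℝ}

lemma polynomialGrowth_coeff_altCosh (n : ℕ) :
    PolynomialGrowth id fun k => coeff n (altCosh k) := by
  refine ⟨2, n, fun k => ?_⟩
  simp only [id]
  rw [coeff_altCosh, abs_div, abs_mul, abs_neg_one_pow, one_mul, Nat.abs_cast]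
  refine (div_le_self (abs_nonneg _) (mod_cast n.factorial_pos)).trans ((abs_add_le _ _).trans ?_)
  rw [abs_pow, abs_pow, abs_neg, Nat.abs_cast, ← two_mul]
  gcongr
  exact le_add_of_nonneg_right zero_le_one

/-- The Lambert series `∑_{k ≥ 1} (-1)^k k p^k / (1 - p^k) * 2 cosh (k X)`, summed
coefficientwise. -/
noncomputable def lambertCosh (p : ℝ) : ℝ⟦X⟧ :=
  .mk fun n => ∑' k, lambertTerm p 1 k * coeff n (altCosh k)

/-- The expansion at a half period, up to an additive constant, of the Weierstrass function whose
nome is the square root of `p`. -/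
noncomputable def ellipticP (p : ℝ) : ℝ⟦X⟧ := trigP + lambertCosh p

lemma hasSum_coeff_mul_lambertCosh (hp : |p| < 1) (F : ℝ⟦X⟧) (n : ℕ) :
    HasSum (fun k => lambertTerm p 1 k * coeff n (F * altCosh k))
      (coeff n (F * lambertCosh p)) := by
  simp only [coeff_mul, mul_sum]
  refine hasSum_sum fun a _ => ?_
  simp only [mul_left_comm (lambertTerm p 1 _), lambertCosh, coeff_mk]
  exact (summable_lambertTerm_mul hp 1 (polynomialGrowth_coeff_altCosh a.2)).hasSum.mul_left _

lemma coeff_derivative_derivative_lambertCosh (n : ℕ) :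
    coeff n (d⁄dX ℝ (d⁄dX ℝ (lambertCosh p))) =
      ∑' k, lambertTerm p 3 k * coeff n (altCosh k) := by
  rw [coeff_derivative, coeff_derivative, lambertCosh, coeff_mk, ← tsum_mul_right, ← tsum_mul_right]
  refine tsum_congr fun k => ?_
  have h := congrArg (coeff n) (derivative_derivative_altCosh k)
  rw [coeff_derivative, coeff_derivative, coeff_smul, smul_eq_mul] at h
  rw [← natCast_pow_mul_lambertTerm p 2 1]
  linear_combination lambertTerm p 1 k * h

lemma coeff_lambertCosh_sq (hp : |p| < 1) (n : ℕ) :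
    coeff n (lambertCosh p ^ 2) = ∑' a : ℕ × ℕ, lambertTerm p 1 a.1 * lambertTerm p 1 a.2 *
      (coeff n (altCosh (a.1 + a.2)) + coeff n (altCosh (Nat.dist a.1 a.2))) := by
  have hc := polynomialGrowth_coeff_altCosh n
  have hs := (summable_lambertTerm_mul_lambertTerm_mul_add hp 1 hc).add
    (summable_lambertTerm_mul_lambertTerm_mul_dist hp 1 hc)
  simp only [← mul_add] at hs
  rw [pow_two, ← (hasSum_coeff_mul_lambertCosh hp _ n).tsum_eq, hs.tsum_prod]
  refine tsum_congr fun k => ?_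
  rw [mul_comm (lambertCosh p), ← (hasSum_coeff_mul_lambertCosh hp _ n).tsum_eq, ← tsum_mul_left]
  refine tsum_congr fun l => ?_
  rw [altCosh_mul, map_add, mul_assoc]

lemma tsum_lambertTerm_mul_fejerSum_altCosh (hp : |p| < 1) (n : ℕ) :
    ∑' k, lambertTerm p 1 k * fejerSum (fun j => coeff n (altCosh j)) k =
      coeff n (2 * trigP * lambertCosh p - C (4 * lambertSum p 1) * trigP) := by
  have hfejer (k : ℕ) : fejerSum (fun j => coeff n (altCosh j)) k =
      coeff n (2 * trigP * altCosh k) - 4 * coeff n trigP := by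
    rw [← map_fejerSum, ← two_mul_trigP_mul_altCosh_sub, ← coeff_C_mul, map_ofNat, ← map_sub]
    congr 1
    ring
  simp only [hfejer, mul_sub]
  rw [(hasSum_coeff_mul_lambertCosh hp _ n).summable.tsum_sub
    ((summable_lambertTerm hp 1).mul_right _), (hasSum_coeff_mul_lambertCosh hp _ n).tsum_eq,
    tsum_mul_right, ← lambertSum, map_sub, coeff_C_mul]
  ring

lemma fejerSum_one (k : ℕ) : fejerSum (fun _ => (1 : ℝ)) k = k ^ 2 := by
  induction k using Nat.twoStepInduction with
  | zero => simp [fejerSum]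
  | one => norm_num [fejerSum]
  | more k ih ih' =>
    rw [fejerSum_add_two, ih, ih', smul_eq_mul, smul_eq_mul]
    push_cast
    ring

lemma lambertSum_two_add_tsum_sq (hp : |p| < 1) :
    12 * (lambertSum p 2 + ∑' k, lambertTerm p 1 k ^ 2) =
      10 * lambertSum p 3 + 2 * lambertSum p 1 - 24 * lambertSum p 1 ^ 2 := by
  have h := one_sub_lambertSum_mul_tsum_lambertTerm hp (c := fun _ => 1)
    (.of_abs_le (B := 1) (by simp))
  have h1 := summable_lambertTerm hp 1
  have hfejer (k : ℕ) : lambertTerm p 1 k * fejerSum (fun _ => (1 : ℝ)) k = lambertTerm p 3 k := by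
    rw [fejerSum_one, mul_comm, natCast_pow_mul_lambertTerm]
  rw [tsum_congr hfejer, tsum_mul_right (a := (1 + 1 : ℝ)),
    ← tsum_mul_tsum_of_summable_norm h1.norm h1.norm] at h
  simp only [mul_one] at h
  rw [← lambertSum, ← lambertSum] at h
  linear_combination -2 * h

theorem derivative_derivative_ellipticP (hp : |p| < 1) :
    d⁄dX ℝ (d⁄dX ℝ (ellipticP p)) = 6 * ellipticP p ^ 2 +
      C (1 - 24 * lambertSum p 1) * ellipticP p +
      C (24 * lambertSum p 1 ^ 2 - 2 * lambertSum p 1 - 10 * lambertSum p 3) := by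
  have hL : d⁄dX ℝ (d⁄dX ℝ (lambertCosh p)) =
      C (1 - 24 * lambertSum p 1) * lambertCosh p +
        C (24 * lambertSum p 1 ^ 2 - 2 * lambertSum p 1 - 10 * lambertSum p 3) +
        C 6 * (2 * trigP * lambertCosh p - C (4 * lambertSum p 1) * trigP) +
        C 6 * lambertCosh p ^ 2 := by
    ext n
    have hkey := one_sub_lambertSum_mul_tsum_lambertTerm hp (polynomialGrowth_coeff_altCosh n)
    have h0 : coeff n (altCosh 0) = 2 * coeff n 1 := by
      rw [altCosh_zero, ← coeff_C_mul, map_ofNat C 2, mul_one]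
    have hC (r : ℝ) : coeff n (C r) = r * coeff n 1 := by rw [← coeff_C_mul, mul_one]
    have hcoeff : ∑' k, lambertTerm p 1 k * coeff n (altCosh k) = coeff n (lambertCosh p) := by
      rw [lambertCosh, coeff_mk]
    rw [hcoeff, ← coeff_derivative_derivative_lambertCosh, ← coeff_lambertCosh_sq hp,
      tsum_lambertTerm_mul_fejerSum_altCosh hp, h0] at hkey
    simp only [map_add, coeff_C_mul, hC]
    linear_combination -hkey - coeff n 1 * lambertSum_two_add_tsum_sq hp
  rw [ellipticP, map_add, map_add, derivative_derivative_trigP, hL]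
  simp only [map_sub, map_mul, map_one, map_ofNat]
  ring

lemma factorial_mul_coeff_ellipticP (j : ℕ) :
    ((2 * j).factorial : ℝ) * coeff (2 * j) (ellipticP p) =
      (1 - 4 ^ (j + 1)) * (bernoulli (2 * (j + 1)) : ℚ) / (2 * (j + 1)) +
        2 * ∑' k, (-1) ^ k * lambertTerm p (2 * j + 1) k := by
  have hf : ((2 * j).factorial : ℝ) ≠ 0 := by positivity
  have h4 : (4 : ℝ) ^ (j + 1) = 2 ^ (2 * j + 2) := by rw [← mul_add_one, pow_mul]; norm_num
  rw [ellipticP, map_add, coeff_trigP, lambertCosh, coeff_mk, mul_add, ← tsum_mul_left,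
    ← tsum_mul_left, h4]
  congr 1
  · push_cast
    field_simp
    rfl
  · refine tsum_congr fun k => ?_
    rw [coeff_altCosh, (even_two_mul j).neg_pow, ← natCast_pow_mul_lambertTerm p (2 * j) 1]
    field_simp
    ring

lemma coeff_one_ellipticP : coeff 1 (ellipticP p) = 0 := by
  have hB : bernoulli (1 + 2) = 0 := bernoulli_eq_zero_of_odd (by decide) (by norm_num)
  simp [ellipticP, lambertCosh, coeff_trigP, coeff_altCosh, hB]

end EllipticP

section LambertSums

variable {p : ℝ}

lemma summable_two_mul_add_one {f : ℕ → ℝ} (hf : Summable f) :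
    Summable fun k => f (2 * k + 1) :=
  hf.comp_injective fun k l h => by simpa using h

lemma tsum_two_mul_add_one {f : ℕ → ℝ} (hf : Summable f) :
    ∑' k, f (2 * k + 1) = ∑' k, f k - ∑' k, f (2 * k) := by
  have heven : Summable fun k => f (2 * k) := hf.comp_injective fun k l h => by simpa using h
  rw [← tsum_even_add_odd heven (summable_two_mul_add_one hf), add_sub_cancel_left]

lemma tsum_lambertTerm_two_mul (p : ℝ) (r : ℕ) :
    ∑' k, lambertTerm p r (2 * k) = 2 ^ r * lambertSum (p ^ 2) r := by
  rw [lambertSum, ← tsum_mul_left]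
  refine tsum_congr fun k => ?_
  rw [lambertTerm, lambertTerm, pow_mul, Nat.cast_mul, mul_pow, Nat.cast_ofNat, mul_assoc]

lemma tsum_lambertTerm_two_mul_add_one (hp : |p| < 1) (r : ℕ) :
    ∑' k, lambertTerm p r (2 * k + 1) = lambertSum p r - 2 ^ r * lambertSum (p ^ 2) r := by
  rw [tsum_two_mul_add_one (summable_lambertTerm hp r), tsum_lambertTerm_two_mul, ← lambertSum]

lemma summable_neg_one_pow_mul_lambertTerm (hp : |p| < 1) (r : ℕ) :
    Summable fun k => (-1) ^ k * lambertTerm p r k :=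
  .of_norm (by simpa using (summable_lambertTerm hp r).norm)

lemma tsum_neg_one_pow_mul_lambertTerm (hp : |p| < 1) (r : ℕ) :
    ∑' k, (-1) ^ k * lambertTerm p r k = 2 ^ (r + 1) * lambertSum (p ^ 2) r - lambertSum p r := by
  have h := tsum_two_mul_add_one (summable_neg_one_pow_mul_lambertTerm hp r)
  simp only [pow_add, pow_mul, neg_one_sq, one_pow, pow_one, one_mul, neg_one_mul, tsum_neg] at h
  rw [tsum_lambertTerm_two_mul, tsum_lambertTerm_two_mul_add_one hp] at h
  linear_combination -h

lemma lambertTerm_neg_of_odd (hp : |p| < 1) (r : ℕ) {k : ℕ} (hk : Odd k) :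
    lambertTerm (-p) r k = 2 * lambertTerm (p ^ 2) r k - lambertTerm p r k := by
  have h1 := one_sub_pow_ne_zero hp hk.pos.ne'
  have h2 := one_sub_pow_ne_zero (p := -p) (by rwa [abs_neg]) hk.pos.ne'
  have h3 := one_sub_pow_ne_zero (abs_pow_lt_one hp two_ne_zero) hk.pos.ne'
  rw [pow_right_comm] at h3
  rw [hk.neg_pow] at h2
  simp only [lambertTerm, hk.neg_pow, pow_right_comm p 2 k]
  generalize p ^ k = y at *
  field_simp
  ring

lemma lambertSum_neg (hp : |p| < 1) (r : ℕ) :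
    lambertSum (-p) r = -lambertSum p r + (2 ^ (r + 1) + 2) * lambertSum (p ^ 2) r -
      2 ^ (r + 1) * lambertSum (p ^ 4) r := by
  have hp2 := abs_pow_lt_one hp two_ne_zero
  have hodd := tsum_two_mul_add_one (summable_lambertTerm (p := -p) (by rwa [abs_neg]) r)
  simp only [lambertTerm_neg_of_odd hp r (odd_two_mul_add_one _)] at hodd
  rw [((summable_two_mul_add_one (summable_lambertTerm hp2 r)).mul_left 2).tsum_sub
    (summable_two_mul_add_one (summable_lambertTerm hp r)), tsum_mul_left,
    tsum_lambertTerm_two_mul_add_one hp, tsum_lambertTerm_two_mul_add_one hp2,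
    tsum_lambertTerm_two_mul, neg_sq, ← pow_mul, ← lambertSum] at hodd
  linear_combination -hodd

lemma coeff_zero_ellipticP (hp : |p| < 1) :
    coeff 0 (ellipticP p) = -1 / 4 + 2 * (4 * lambertSum (p ^ 2) 1 - lambertSum p 1) := by
  have h := factorial_mul_coeff_ellipticP (p := p) 0
  rw [tsum_neg_one_pow_mul_lambertTerm hp] at h
  norm_num [bernoulli_two] at h
  rw [coeff_zero_eq_constantCoeff_apply, h]
  ring

lemma two_mul_coeff_two_ellipticP (hp : |p| < 1) :
    2 * coeff 2 (ellipticP p) = 1 / 8 + 2 * (16 * lambertSum (p ^ 2) 3 - lambertSum p 3) := by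
  have hB : bernoulli 4 = -1 / 30 := by
    rw [bernoulli_eq_bernoulli'_of_ne_one (by norm_num), bernoulli'_four]
  have h := factorial_mul_coeff_ellipticP (p := p) 1
  rw [tsum_neg_one_pow_mul_lambertTerm hp] at h
  norm_num [hB] at h
  rw [h]

lemma two_mul_coeff_two_ellipticP_eq (hp : |p| < 1) :
    2 * coeff 2 (ellipticP p) = 6 * coeff 0 (ellipticP p) ^ 2 +
      (1 - 24 * lambertSum p 1) * coeff 0 (ellipticP p) +
        (24 * lambertSum p 1 ^ 2 - 2 * lambertSum p 1 - 10 * lambertSum p 3) := by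
  have h := congrArg constantCoeff (derivative_derivative_ellipticP hp)
  rw [← coeff_zero_eq_constantCoeff_apply, coeff_derivative, coeff_derivative] at h
  simp only [map_add, map_mul, map_pow, map_ofNat, constantCoeff_C] at h
  rw [coeff_zero_eq_constantCoeff_apply, ← h]
  norm_num [mul_comm]

lemma sq_one_add_lambertSum (hp : |p| < 1) :
    (1 + 24 * lambertSum p 1 - 48 * lambertSum (p ^ 2) 1) ^ 2 =
      1 + 48 * lambertSum p 3 + 192 * lambertSum (p ^ 2) 3 := by
  have h := two_mul_coeff_two_ellipticP_eq hp
  rw [two_mul_coeff_two_ellipticP hp, coeff_zero_ellipticP hp] at h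
  linear_combination -6 * h

/-- The Lambert series of Jacobi's four-square theorem,
`1 + 8 ∑_{n ≥ 1} (σ(n) - 4 σ(n / 4)) q^n`. -/
noncomputable def fourSquareSeries (q : ℝ) : ℝ := 1 + 8 * lambertSum q 1 - 32 * lambertSum (q ^ 4) 1

variable {q : ℝ}

lemma four_mul_fourSquareSeries_sq (hq : |q| < 1) :
    4 * fourSquareSeries (q ^ 2) =
      fourSquareSeries q + fourSquareSeries (-q) + 2 * fourSquareSeries (-q ^ 2) := by
  have h1 := lambertSum_neg hq 1
  have h2 := lambertSum_neg (abs_pow_lt_one hq two_ne_zero) 1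
  simp only [fourSquareSeries, (by decide : Even 4).neg_pow, ← pow_mul] at *
  norm_num at *
  rw [h1, h2]
  ring

lemma fourSquareSeries_mul_neg (hq : |q| < 1) :
    fourSquareSeries q * fourSquareSeries (-q) = fourSquareSeries (-q ^ 2) ^ 2 := by
  have hq2 := abs_pow_lt_one hq two_ne_zero
  have h1 := lambertSum_neg hq
  have h2 := lambertSum_neg hq2
  have e1 := sq_one_add_lambertSum hq
  have e2 := sq_one_add_lambertSum (p := -q) (by rwa [abs_neg])
  have e3 := sq_one_add_lambertSum hq2
  have e4 := sq_one_add_lambertSum (p := -q ^ 2) (by rwa [abs_neg])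
  have e5 := sq_one_add_lambertSum (abs_pow_lt_one hq four_ne_zero)
  simp only [fourSquareSeries, (by decide : Even 4).neg_pow, even_two.neg_pow, ← pow_mul,
    h1, h2] at *
  norm_num at *
  linear_combination -(e1 + e2 - 22 * e3 + 4 * (e4 + 4 * e5)) / 18

lemma fourSquareSeries_pow_two (hq : |q| < 1) :
    fourSquareSeries q ^ 2 = 1 + 16 * (16 * lambertSum (q ^ 2) 3 - lambertSum (-q) 3) := by
  have h1 := lambertSum_neg hq
  have e1 := sq_one_add_lambertSum hq
  have e2 := sq_one_add_lambertSum (p := -q) (by rwa [abs_neg])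
  have e3 := sq_one_add_lambertSum (abs_pow_lt_one hq two_ne_zero)
  simp only [fourSquareSeries, even_two.neg_pow, ← pow_mul, h1] at *
  norm_num at *
  linear_combination (e1 - e2) / 6 + (e1 + e2 + 16 * e3) / 18

end LambertSums

section AGMUniqueness

open Topology

variable {𝕜 : Type*} [NontriviallyNormedField 𝕜] {f g u : 𝕜 → 𝕜}

lemma analyticOrderAt_sq_zero : analyticOrderAt (fun x : 𝕜 => x ^ 2) 0 = 2 := by
  simpa [Pi.pow_def] using analyticOrderAt_centeredMonomial (𝕜 := 𝕜) (z₀ := 0) (n := 2)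

lemma analyticOrderAt_neg_sq_zero : analyticOrderAt (fun x : 𝕜 => -x ^ 2) 0 = 2 :=
  analyticOrderAt_neg.trans analyticOrderAt_sq_zero

lemma analyticOrderAt_mul_le_analyticOrderAt_mul_comp (hg : AnalyticAt 𝕜 g 0)
    (hf : AnalyticAt 𝕜 f 0) (hu : AnalyticAt 𝕜 u 0) (hu0 : u 0 = 0) :
    analyticOrderAt f 0 * analyticOrderAt u 0 ≤ analyticOrderAt (fun x => g x * f (u x)) 0 := by
  have hfu : AnalyticAt 𝕜 f (u 0) := by rwa [hu0]
  have hcomp := hfu.analyticOrderAt_comp hu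
  simp only [hu0, sub_zero] at hcomp
  rw [← hcomp]
  exact le_add_self.trans (analyticOrderAt_mul hg (hfu.comp hu)).ge

lemma analyticOrderAt_sub_neg_eq_one [CharZero 𝕜] (hf : AnalyticAt 𝕜 f 0) (hne : deriv f 0 ≠ 0) :
    analyticOrderAt (fun x => f x - f (-x)) 0 = 1 := by
  have hneg : AnalyticAt 𝕜 (fun x => f (-x)) 0 := hf.comp_of_eq (by fun_prop) (by simp)
  refine (hf.sub hneg).analyticOrderAt_eq_one_of_zero_deriv_ne_zero (by simp) ?_
  rw [deriv_sub hf.differentiableAt hneg.differentiableAt, deriv_comp_neg, neg_zero,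
    sub_neg_eq_add, ← two_mul]
  exact mul_ne_zero two_ne_zero hne

lemma min_analyticOrderAt_add_neg_sub_neg_le [CharZero 𝕜] (hf : AnalyticAt 𝕜 f 0) :
    min (analyticOrderAt (fun x => f x + f (-x)) 0) (analyticOrderAt (fun x => f x - f (-x)) 0) ≤
      analyticOrderAt f 0 := by
  have h2 : analyticOrderAt (fun _ : 𝕜 => (2 : 𝕜)) 0 = 0 :=
    analyticAt_const.analyticOrderAt_eq_zero.2 two_ne_zero
  calc _ ≤ analyticOrderAt ((fun x => f x + f (-x)) + fun x => f x - f (-x)) 0 :=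
        le_analyticOrderAt_add
    _ = analyticOrderAt ((fun _ => 2) * f) 0 := by
        congr 1
        ext x
        simp only [Pi.add_apply, Pi.mul_apply]
        ring
    _ = analyticOrderAt f 0 := by rw [analyticOrderAt_mul analyticAt_const hf, h2, zero_add]

/-- The quadratic relations between the values of `f` at `x`, `-x` and at `x ^ 2`, `-x ^ 2` that are
satisfied near the origin by the fourth power of the theta function: replacing `x` by `x ^ 2`
performs a step of the arithmetic-geometric mean on the square roots of `f x` and `f (-x)`. -/
structure IsAGMSolution (f : 𝕜 → 𝕜) : Prop where
  add_neg : ∀ᶠ x in 𝓝 0, f x + f (-x) = 4 * f (x ^ 2) - 2 * f (-x ^ 2)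
  mul_neg : ∀ᶠ x in 𝓝 0, f x * f (-x) = f (-x ^ 2) ^ 2

namespace IsAGMSolution

lemma sub_neg_sq (hf : IsAGMSolution f) :
    ∀ᶠ x in 𝓝 0, (f x - f (-x)) ^ 2 = 16 * f (x ^ 2) * (f (x ^ 2) - f (-x ^ 2)) := by
  filter_upwards [hf.add_neg, hf.mul_neg] with x hadd hmul
  linear_combination (f x + f (-x) + 4 * f (x ^ 2) - 2 * f (-x ^ 2)) * hadd - 4 * hmul

lemma le_analyticOrderAt_add_neg (hf : AnalyticAt 𝕜 f 0) (hg : AnalyticAt 𝕜 g 0)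
    (hfs : IsAGMSolution f) (hgs : IsAGMSolution g) :
    analyticOrderAt (f - g) 0 * 2 ≤ analyticOrderAt (fun x => (f - g) x + (f - g) (-x)) 0 := by
  have hrel : (fun x => (f - g) x + (f - g) (-x)) =ᶠ[𝓝 0]
      (fun x => 4 * (f - g) (x ^ 2)) - fun x => 2 * (f - g) (-x ^ 2) := by
    filter_upwards [hfs.add_neg, hgs.add_neg] with x hfx hgx
    simp only [Pi.sub_apply]
    linear_combination hfx - hgx
  rw [analyticOrderAt_congr hrel]
  refine le_trans (le_min ?_ ?_) le_analyticOrderAt_sub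
  · rw [← analyticOrderAt_sq_zero (𝕜 := 𝕜)]
    exact analyticOrderAt_mul_le_analyticOrderAt_mul_comp analyticAt_const (hf.sub hg)
      (by fun_prop) (by simp)
  · rw [← analyticOrderAt_neg_sq_zero (𝕜 := 𝕜)]
    exact analyticOrderAt_mul_le_analyticOrderAt_mul_comp analyticAt_const (hf.sub hg)
      (by fun_prop) (by simp)

lemma le_analyticOrderAt_sub_neg_mul (hf : AnalyticAt 𝕜 f 0) (hg : AnalyticAt 𝕜 g 0)
    (hfs : IsAGMSolution f) (hgs : IsAGMSolution g) :
    analyticOrderAt (f - g) 0 * 2 ≤ analyticOrderAt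
      (fun x => ((f + g) x - (f + g) (-x)) * ((f - g) x - (f - g) (-x))) 0 := by
  have hsq {h : 𝕜 → 𝕜} (hh : AnalyticAt 𝕜 h 0) : AnalyticAt 𝕜 (fun x => h (x ^ 2)) 0 :=
    hh.comp_of_eq (by fun_prop) (by simp)
  have hnsq : AnalyticAt 𝕜 (fun x => f (-x ^ 2)) 0 := hf.comp_of_eq (by fun_prop) (by simp)
  have hrel : (fun x => ((f + g) x - (f + g) (-x)) * ((f - g) x - (f - g) (-x))) =ᶠ[𝓝 0]
      (fun x => 16 * (f (x ^ 2) + g (x ^ 2) - f (-x ^ 2)) * (f - g) (x ^ 2)) -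
        fun x => 16 * g (x ^ 2) * (f - g) (-x ^ 2) := by
    filter_upwards [hfs.sub_neg_sq, hgs.sub_neg_sq] with x hfx hgx
    simp only [Pi.sub_apply, Pi.add_apply]
    linear_combination hfx - hgx
  rw [analyticOrderAt_congr hrel]
  refine le_trans (le_min ?_ ?_) le_analyticOrderAt_sub
  · rw [← analyticOrderAt_sq_zero (𝕜 := 𝕜)]
    exact analyticOrderAt_mul_le_analyticOrderAt_mul_comp
      (analyticAt_const.mul (((hsq hf).add (hsq hg)).sub hnsq)) (hf.sub hg) (by fun_prop) (by simp)
  · rw [← analyticOrderAt_neg_sq_zero (𝕜 := 𝕜)]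
    exact analyticOrderAt_mul_le_analyticOrderAt_mul_comp (analyticAt_const.mul (hsq hg))
      (hf.sub hg) (by fun_prop) (by simp)

/-- If `N` is the order of vanishing of `f - g`, then `add_neg` shows that its even part vanishes to
order `2 * N`, and `sub_neg_sq` that its odd part vanishes to order `2 * N - 1`, so that
`2 * N - 1 ≤ N`. -/
theorem eventuallyEq [CharZero 𝕜] [CompleteSpace 𝕜] (hf : AnalyticAt 𝕜 f 0) (hg : AnalyticAt 𝕜 g 0)
    (hfs : IsAGMSolution f) (hgs : IsAGMSolution g)
    (h0 : f 0 = g 0) (h1 : deriv f 0 = deriv g 0) (hne : deriv f 0 ≠ 0) : f =ᶠ[𝓝 0] g := by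
  have hD : AnalyticAt 𝕜 (f - g) 0 := hf.sub hg
  have htwo : (2 : ℕ) ≤ analyticOrderAt (f - g) 0 := by
    rw [natCast_le_analyticOrderAt_iff_iteratedDeriv_eq_zero hD]
    intro i hi
    interval_cases i
    · simp [h0]
    · rw [iteratedDeriv_one, deriv_sub hf.differentiableAt hg.differentiableAt, h1, sub_self]
  have hneg {h : 𝕜 → 𝕜} (hh : AnalyticAt 𝕜 h 0) : AnalyticAt 𝕜 (fun x => h x - h (-x)) 0 :=
    hh.sub (hh.comp_of_eq (by fun_prop) (by simp))
  have hodd := le_analyticOrderAt_sub_neg_mul hf hg hfs hgs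
  have hsum : deriv (f + g) 0 ≠ 0 := by
    rw [deriv_add hf.differentiableAt hg.differentiableAt, ← h1, ← two_mul]
    exact mul_ne_zero two_ne_zero hne
  rw [show (fun x => ((f + g) x - (f + g) (-x)) * ((f - g) x - (f - g) (-x))) =
      (fun x => (f + g) x - (f + g) (-x)) * fun x => (f - g) x - (f - g) (-x) from rfl,
    analyticOrderAt_mul (hneg (hf.add hg)) (hneg hD),
    analyticOrderAt_sub_neg_eq_one (hf.add hg) hsum] at hodd
  have hmin := (min_le_min_right _ (le_analyticOrderAt_add_neg hf hg hfs hgs)).trans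
    (min_analyticOrderAt_add_neg_sub_neg_le hD)
  have htop : analyticOrderAt (f - g) 0 = ⊤ := by
    generalize analyticOrderAt (f - g) 0 = N at *
    by_contra hN
    lift N to ℕ using hN
    rcases min_le_iff.1 hmin with h | h
    · norm_cast at h htwo
      lia
    · have hN := hodd.trans (add_le_add_right h 1)
      norm_cast at hN htwo
      lia
  filter_upwards [analyticOrderAt_eq_top.1 htop] with x hx using sub_eq_zero.1 hx

end IsAGMSolution

end AGMUniqueness

section FourSquares

open scoped Topology ArithmeticFunction.sigma

lemma PolynomialGrowth.hasFPowerSeriesOnBall {F : ℕ → ℝ} (hF : PolynomialGrowth id F) :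
    HasFPowerSeriesOnBall (fun x => ∑' n, F n * x ^ n) (.ofScalars ℝ F) 0 1 where
  r_le := ENNReal.le_of_forall_nnreal_lt fun r hr => by
    refine FormalMultilinearSeries.le_radius_of_summable _ ?_
    have hr : |(r : ℝ)| < 1 := by simpa using hr
    refine (hF.summable_mul_pow hr).norm.congr fun n => ?_
    simp
  r_pos := one_pos
  hasSum {y} hy := by
    have hy : |y| < 1 := by simpa [enorm, ← NNReal.coe_lt_coe] using hy
    simpa [FormalMultilinearSeries.ofScalars_apply_eq, mul_comm] using
      (hF.summable_mul_pow hy).hasSum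

lemma PolynomialGrowth.analyticOnNhd {F : ℕ → ℝ} (hF : PolynomialGrowth id F) :
    AnalyticOnNhd ℝ (fun x => ∑' n, F n * x ^ n) (Metric.ball 0 1) := by
  simpa [← ENNReal.ofReal_one, Metric.eball_ofReal] using hF.hasFPowerSeriesOnBall.analyticOnNhd

lemma PolynomialGrowth.hasDerivAt_zero {F : ℕ → ℝ} (hF : PolynomialGrowth id F) :
    HasDerivAt (fun x => ∑' n, F n * x ^ n) (F 1) 0 := by
  simpa [FormalMultilinearSeries.ofScalars_apply_eq] using
    hF.hasFPowerSeriesOnBall.hasFPowerSeriesAt.hasDerivAt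

lemma polynomialGrowth_sigma (r : ℕ) : PolynomialGrowth id fun n => (σ r n : ℝ) := by
  refine ⟨1, r + 1, fun n => ?_⟩
  have h := (ArithmeticFunction.sigma_le_pow_succ r n).trans (Nat.pow_le_pow_left n.le_succ _)
  rw [one_mul, Nat.abs_cast, id]
  exact_mod_cast h

lemma lambertSum_eq_tsum_sigma {q : ℝ} (hq : |q| < 1) (r : ℕ) :
    lambertSum q r = ∑' n, σ r n * q ^ n := by
  have h := tsum_pow_div_one_sub_eq_tsum_sigma (𝕜 := ℝ) hq r
  have h1 := tsum_zero_pnat_eq_tsum_nat (summable_lambertTerm hq r)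
  have h2 := tsum_zero_pnat_eq_tsum_nat ((polynomialGrowth_sigma r).summable_mul_pow hq)
  simp only [lambertTerm_zero, zero_add, ArithmeticFunction.map_zero, Nat.cast_zero,
    zero_mul] at h1 h2
  rw [lambertSum, ← h1, ← h2, ← h]
  exact tsum_congr fun n => by rw [lambertTerm, mul_div_assoc]

lemma summable_pow_natAbs_sq {q : ℝ} (hq : |q| < 1) : Summable fun n : ℤ => q ^ (n.natAbs ^ 2) := by
  have h : Summable fun n : ℕ => q ^ n ^ 2 := by
    refine .of_norm_bounded (summable_geometric_of_lt_one (abs_nonneg q) hq) fun n => ?_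
    rw [norm_pow, Real.norm_eq_abs]
    exact pow_le_pow_of_le_one (abs_nonneg q) hq.le (Nat.le_self_pow two_ne_zero n)
  rw [summable_int_iff_summable_nat_and_neg]
  simpa using h

open Classical in
lemma sqGen_eq_tsum {q : ℝ} (hq : |q| < 1) :
    sqGen q = 2 * (∑' n : ℕ, (if IsSquare n then 1 else 0) * q ^ n) - 1 := by
  have hinj : Function.Injective fun n : ℕ => n ^ 2 := Nat.pow_left_injective two_ne_zero
  have hsupp : Function.support (fun n : ℕ => (if IsSquare n then 1 else 0) * q ^ n) ⊆
      Set.range fun n : ℕ => n ^ 2 := fun n hn => by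
    obtain ⟨m, rfl⟩ := isSquare_iff_exists_sq n |>.1 (of_not_not fun h => hn (by simp [h]))
    exact ⟨m, rfl⟩
  have hs := (summable_int_iff_summable_nat_and_neg.1 (summable_pow_natAbs_sq hq)).1
  rw [sqGen, (HasSum.of_nat_of_neg (f := fun n : ℤ => q ^ (n.natAbs ^ 2)) hs.hasSum
    (by simpa using hs.hasSum)).tsum_eq, ← hinj.tsum_eq hsupp]
  simp [two_mul, IsSquare.sq]

open Classical in
lemma polynomialGrowth_ite_isSquare :
    PolynomialGrowth id fun n => if IsSquare n then (1 : ℝ) else 0 :=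
  .of_abs_le (B := 1) fun n => by split_ifs <;> simp

lemma analyticOnNhd_sqGen : AnalyticOnNhd ℝ sqGen (Metric.ball 0 1) :=
  ((analyticOnNhd_const.mul polynomialGrowth_ite_isSquare.analyticOnNhd).sub
    analyticOnNhd_const).congr Metric.isOpen_ball fun q hq =>
      (sqGen_eq_tsum (by simpa using hq)).symm

lemma eventually_abs_lt_one : ∀ᶠ x : ℝ in 𝓝 0, |x| < 1 :=
  continuous_abs.continuousAt.eventually_lt continuousAt_const (by simp)

lemma hasDerivAt_sqGen_zero : HasDerivAt sqGen 2 0 := by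
  have h := (polynomialGrowth_ite_isSquare.hasDerivAt_zero.const_mul 2).sub_const 1
  simp only [IsSquare.one, if_true, mul_one] at h
  exact h.congr_of_eventuallyEq (eventually_abs_lt_one.mono fun q hq => sqGen_eq_tsum hq)

@[simp]
lemma sqGen_zero : sqGen 0 = 1 := by
  rw [sqGen, tsum_eq_single 0 fun n hn => by simp [hn]]
  simp

lemma hasSum_sqGen_mul_sqGen {x y : ℝ} (hx : |x| < 1) (hy : |y| < 1) :
    HasSum (fun a : ℤ × ℤ => x ^ (a.1.natAbs ^ 2) * y ^ (a.2.natAbs ^ 2)) (sqGen x * sqGen y) := by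
  have hx := (summable_pow_natAbs_sq hx).norm
  have hy := (summable_pow_natAbs_sq hy).norm
  rw [sqGen, sqGen, tsum_mul_tsum_of_summable_norm hx hy]
  exact (summable_mul_of_summable_norm hx hy).hasSum

lemma hasSum_comp_add_sub {E : Type*} [AddCommMonoid E] [TopologicalSpace E] {f : ℤ × ℤ → E} {s : E}
    (hf : HasSum f s) (hodd : ∀ a, ¬ Even (a.1 + a.2) → f a = 0) :
    HasSum (fun a : ℤ × ℤ => f (a.1 + a.2, a.1 - a.2)) s := by
  have hinj : Function.Injective fun a : ℤ × ℤ => (a.1 + a.2, a.1 - a.2) := fun a b hab => by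
    simp only [Prod.mk.injEq] at hab
    ext <;> lia
  refine (hinj.hasSum_iff fun a ha => hodd a ?_).2 hf
  rintro ⟨r, hr⟩
  exact ha ⟨(r, a.1 - r), by ext <;> simp; lia⟩

lemma neg_pow_natAbs_sq (q : ℝ) (n : ℤ) :
    (-q) ^ (n.natAbs ^ 2) = if Even n then q ^ (n.natAbs ^ 2) else -q ^ (n.natAbs ^ 2) := by
  split_ifs with hn
  · exact ((Int.natAbs_even.2 hn).pow_of_ne_zero two_ne_zero).neg_pow q
  · exact (Int.natAbs_odd.2 (Int.not_even_iff_odd.1 hn)).pow.neg_pow q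

lemma pow_natAbs_add_sq_mul_pow_natAbs_sub_sq (q : ℝ) (k l : ℤ) :
    q ^ ((k + l).natAbs ^ 2) * q ^ ((k - l).natAbs ^ 2) =
      (q ^ 2) ^ (k.natAbs ^ 2) * (q ^ 2) ^ (l.natAbs ^ 2) := by
  have h : (k + l).natAbs ^ 2 + (k - l).natAbs ^ 2 = 2 * (k.natAbs ^ 2 + l.natAbs ^ 2) := by
    zify
    simp only [sq_abs]
    ring
  rw [← pow_add, ← pow_add, ← pow_mul, h]

@[simp]
lemma lambertSum_zero_left (r : ℕ) : lambertSum 0 r = 0 := by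
  rw [lambertSum, ← tsum_zero]
  exact tsum_congr fun k => by cases k <;> simp [lambertTerm]

section sqGen

variable {q : ℝ}

theorem sqGen_sq_add_sqGen_neg_sq (hq : |q| < 1) :
    sqGen q ^ 2 + sqGen (-q) ^ 2 = 2 * sqGen (q ^ 2) ^ 2 := by
  have hnq : |-q| < 1 := by rwa [abs_neg]
  have hq2 := abs_pow_lt_one hq two_ne_zero
  simp only [sq (sqGen _)]
  refine (hasSum_comp_add_sub ((hasSum_sqGen_mul_sqGen hq hq).add
    (hasSum_sqGen_mul_sqGen hnq hnq)) fun a ha => ?_).unique ?_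
  · rw [neg_pow_natAbs_sq, neg_pow_natAbs_sq]
    by_cases h1 : Even a.1 <;> by_cases h2 : Even a.2 <;> simp [Int.even_add, h1, h2] at ha ⊢
  · refine ((hasSum_sqGen_mul_sqGen hq2 hq2).mul_left 2).congr_fun fun a => ?_
    rw [pow_natAbs_add_sq_mul_pow_natAbs_sub_sq, pow_natAbs_add_sq_mul_pow_natAbs_sub_sq, neg_sq]
    ring

theorem sqGen_mul_sqGen_neg (hq : |q| < 1) : sqGen q * sqGen (-q) = sqGen (-q ^ 2) ^ 2 := by
  have hnq : |-q| < 1 := by rwa [abs_neg]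
  have hnq2 : |-q ^ 2| < 1 := by simpa using abs_pow_lt_one hq two_ne_zero
  refine mul_left_cancel₀ two_ne_zero ?_
  rw [sq (sqGen _), two_mul]
  nth_rw 2 [mul_comm]
  refine (hasSum_comp_add_sub ((hasSum_sqGen_mul_sqGen hq hnq).add
    (hasSum_sqGen_mul_sqGen hnq hq)) fun a ha => ?_).unique ?_
  · rw [neg_pow_natAbs_sq, neg_pow_natAbs_sq]
    by_cases h1 : Even a.1 <;> by_cases h2 : Even a.2 <;> simp [Int.even_add, h1, h2] at ha ⊢
  · refine ((hasSum_sqGen_mul_sqGen hnq2 hnq2).mul_left 2).congr_fun fun a => ?_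
    have h := pow_natAbs_add_sq_mul_pow_natAbs_sub_sq q a.1 a.2
    simp only [neg_pow_natAbs_sq, Int.even_add, Int.even_sub]
    by_cases h1 : Even a.1 <;> by_cases h2 : Even a.2 <;>
      simp only [h1, h2, if_true, if_false, iff_self, iff_true, iff_false, not_true] <;>
      first | linear_combination 2 * h | linear_combination -2 * h

lemma isAGMSolution_sqGen_pow_four : IsAGMSolution fun x => sqGen x ^ 4 where
  add_neg := eventually_abs_lt_one.mono fun q hq => by
    linear_combination (sqGen q ^ 2 + sqGen (-q) ^ 2 + 2 * sqGen (q ^ 2) ^ 2) *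
      sqGen_sq_add_sqGen_neg_sq hq -
        2 * (sqGen q * sqGen (-q) + sqGen (-q ^ 2) ^ 2) * sqGen_mul_sqGen_neg hq
  mul_neg := eventually_abs_lt_one.mono fun q hq => by
    rw [← mul_pow, sqGen_mul_sqGen_neg hq]
    ring

lemma isAGMSolution_fourSquareSeries : IsAGMSolution fourSquareSeries where
  add_neg := eventually_abs_lt_one.mono fun q hq => by
    linear_combination -four_mul_fourSquareSeries_sq hq
  mul_neg := eventually_abs_lt_one.mono fun q hq => fourSquareSeries_mul_neg hq

lemma analyticOnNhd_lambertSum (r : ℕ) :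
    AnalyticOnNhd ℝ (fun q => lambertSum q r) (Metric.ball 0 1) :=
  (polynomialGrowth_sigma r).analyticOnNhd.congr Metric.isOpen_ball fun q hq =>
    (lambertSum_eq_tsum_sigma (by simpa using hq) r).symm

lemma analyticOnNhd_fourSquareSeries : AnalyticOnNhd ℝ fourSquareSeries (Metric.ball 0 1) := by
  have hpow : AnalyticOnNhd ℝ (fun q => lambertSum (q ^ 4) 1) (Metric.ball 0 1) :=
    (analyticOnNhd_lambertSum 1).comp (fun q _ => by fun_prop) fun q hq => by
      simpa using abs_pow_lt_one (by simpa using hq) four_ne_zero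
  exact (analyticOnNhd_const.add (analyticOnNhd_const.mul (analyticOnNhd_lambertSum 1))).sub
    (analyticOnNhd_const.mul hpow)

lemma hasDerivAt_fourSquareSeries_zero : HasDerivAt fourSquareSeries 8 0 := by
  have h : HasDerivAt (fun q => lambertSum q 1) 1 0 := by
    have h := (polynomialGrowth_sigma 1).hasDerivAt_zero
    rw [ArithmeticFunction.sigma_one, Nat.cast_one] at h
    exact h.congr_of_eventuallyEq
      (eventually_abs_lt_one.mono fun q hq => lambertSum_eq_tsum_sigma hq 1)
  have hpow : HasDerivAt (fun q : ℝ => lambertSum (q ^ 4) 1) 0 0 := by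
    have h := h.comp_of_eq (0 : ℝ) (hasDerivAt_pow 4 (0 : ℝ)) (by simp)
    norm_num at h
    exact h
  have h := ((h.const_mul 8).const_add 1).fun_sub (hpow.const_mul 32)
  norm_num at h
  exact h

theorem sqGen_pow_four (hq : |q| < 1) : sqGen q ^ 4 = fourSquareSeries q := by
  have h0 : (0 : ℝ) ∈ Metric.ball 0 1 := Metric.mem_ball_self one_pos
  have hθ := analyticOnNhd_sqGen.fun_pow 4
  have hθ' : HasDerivAt (fun x => sqGen x ^ 4) 8 0 := by
    have h := hasDerivAt_sqGen_zero.fun_pow 4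
    norm_num at h
    exact h
  refine hθ.eqOn_of_preconnected_of_eventuallyEq analyticOnNhd_fourSquareSeries
    (convex_ball 0 1).isPreconnected h0 ?_ (by simpa using hq)
  refine isAGMSolution_sqGen_pow_four.eventuallyEq (hθ 0 h0) (analyticOnNhd_fourSquareSeries 0 h0)
    isAGMSolution_fourSquareSeries ?_ ?_ ?_
  · simp [fourSquareSeries]
  · rw [hθ'.deriv, hasDerivAt_fourSquareSeries_zero.deriv]
  · rw [hθ'.deriv]
    norm_num

theorem sqGen_pow_eight (hq : |q| < 1) :
    sqGen q ^ 8 = 1 + 16 * (16 * lambertSum (q ^ 2) 3 - lambertSum (-q) 3) := by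
  rw [← fourSquareSeries_pow_two hq, ← sqGen_pow_four hq, ← pow_mul]

end sqGen

end FourSquares

section HankelDeterminant

lemma abs_bernoulli_two_mul {n : ℕ} (hn : n ≠ 0) :
    |((bernoulli (2 * n) : ℚ) : ℝ)| = (-1) ^ (n + 1) * (bernoulli (2 * n) : ℚ) := by
  have hzeta : 0 ≤ (2 ^ (2 * n - 1) * Real.pi ^ (2 * n) / (2 * n).factorial) *
      ((-1) ^ (n + 1) * (bernoulli (2 * n) : ℚ) : ℝ) :=
    calc (0 : ℝ) ≤ ∑' k : ℕ, 1 / (k : ℝ) ^ (2 * n) := tsum_nonneg fun k => by positivity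
      _ = _ := by
        rw [(hasSum_zeta_nat hn).tsum_eq]
        ring
  rw [← abs_of_nonneg (nonneg_of_mul_nonneg_right hzeta (by positivity)), abs_mul,
    abs_neg_one_pow, one_mul]

variable {q : ℝ}

lemma tsum_pow_succ_mul_div (hq : |q| < 1) (r : ℕ) :
    ∑' k : ℕ, q ^ (k + 1) * ((k : ℝ) + 1) ^ r / (1 - (-q) ^ (k + 1)) =
      ∑' k, (-1) ^ k * lambertTerm (-q) r k := by
  rw [(summable_neg_one_pow_mul_lambertTerm (by rwa [abs_neg]) r).tsum_eq_zero_add]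
  simp only [lambertTerm_zero, mul_zero, zero_add]
  refine tsum_congr fun k => ?_
  have hsign : (-1 : ℝ) ^ (k + 1) * (-q) ^ (k + 1) = q ^ (k + 1) := by simp [← mul_pow]
  rw [lambertTerm, ← hsign]
  push_cast
  ring

lemma tangentNum_add_mul_tsum (hq : |q| < 1) (n : ℕ) :
    tangentNum (n + 2) + 4 * (-1) ^ n *
        ∑' k : ℕ, q ^ (k + 1) * ((k : ℝ) + 1) ^ (2 * n + 3) / (1 - (-q) ^ (k + 1)) =
      2 * ((-1) ^ n *
        ((2 * (n + 1)).factorial * coeff (2 * (n + 1)) (ellipticP (-q)))) := by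
  rw [factorial_mul_coeff_ellipticP, tsum_pow_succ_mul_div hq, tangentNum,
    abs_bernoulli_two_mul (by lia), show 2 * n + 3 = 2 * (n + 1) + 1 by ring]
  push_cast
  field_simp
  ring

lemma det_hankel_ellipticP (hq : |q| < 1) (m : ℕ) :
    (Matrix.of fun i j : Fin m => ((2 * (i + j + 1 : ℕ)).factorial : ℝ) *
        coeff (2 * (i + j + 1 : ℕ)) (ellipticP (-q))).det =
      ∏ i ∈ range m, ((2 * i + 1).factorial * (2 * i + 2).factorial *
        ((sqGen q ^ 4 / 4) ^ 2) ^ (i + 1) : ℝ) := by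
  have hnq : |-q| < 1 := by rwa [abs_neg]
  let P := ellipticP (-q)
  let P₀ := coeff 0 P
  have hcoeff (n : ℕ) : coeff (2 * (n + 1)) (P - C P₀) = coeff (2 * (n + 1)) P := by
    rw [map_sub, coeff_C, if_neg (by lia), sub_zero]
  have hderiv : d⁄dX ℝ (P - C P₀) = d⁄dX ℝ P := by rw [map_sub, derivative_C, sub_zero]
  have ha : 2 * (sqGen q ^ 4 / 4) ^ 2 = 2 * coeff 2 P := by
    rw [two_mul_coeff_two_ellipticP hnq, neg_sq]
    linear_combination sqGen_pow_eight hq / 8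
  have hode : d⁄dX ℝ (d⁄dX ℝ (P - C P₀)) = 6 * (P - C P₀) ^ 2 +
      C (12 * P₀ + 1 - 24 * lambertSum (-q) 1) * (P - C P₀) + C (2 * (sqGen q ^ 4 / 4) ^ 2) := by
    rw [hderiv, derivative_derivative_ellipticP hnq, ha, two_mul_coeff_two_ellipticP_eq hnq]
    simp only [map_add, map_sub, map_mul, map_pow, map_one, map_ofNat]
    ring
  rw [← det_hankel_of_quadratic_ode (by simp [P₀]) (by simp [P, coeff_one_ellipticP]) hode]
  simp only [hcoeff, P]

lemma det_of_mul_mul {n R : Type*} [Fintype n] [DecidableEq n] [CommRing R] (u : n → R)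
    (M : Matrix n n R) :
    (Matrix.of fun i j => u i * u j * M i j).det = (∏ i, u i) ^ 2 * M.det := by
  have h := Matrix.det_mul_column u (Matrix.of fun i j => u j * M i j)
  simp only [Matrix.of_apply, ← mul_assoc] at h
  rw [h, Matrix.det_mul_row, sq, mul_assoc]

lemma det_hankel_sign {R : Type*} [CommRing R] {m : ℕ} (h : ℕ → R) :
    (Matrix.of fun i j : Fin m => (-1) ^ (i + j : ℕ) * h (i + j)).det =
      (Matrix.of fun i j : Fin m => h (i + j)).det := by
  simpa [← prod_pow, ← pow_mul, pow_add] using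
    det_of_mul_mul (fun i : Fin m => (-1 : R) ^ (i : ℕ)) (Matrix.of fun i j => h (i + j))

lemma prod_range_factorial_mul_factorial (m : ℕ) :
    ∏ i ∈ range m, (2 * i + 1).factorial * (2 * i + 2).factorial =
      ∏ i ∈ Icc 1 (2 * m), i.factorial := by
  induction m with
  | zero => simp
  | succ m ih =>
    rw [prod_range_succ, ih, mul_add_one, prod_Icc_succ_top (by lia), prod_Icc_succ_top (by lia),
      mul_assoc]

lemma prod_range_sq_pow_succ {M : Type*} [CommMonoid M] (y : M) (m : ℕ) :
    ∏ i ∈ range m, (y ^ 2) ^ (i + 1) = y ^ (m * (m + 1)) := by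
  induction m with
  | zero => simp
  | succ m ih =>
    rw [prod_range_succ, ih, ← pow_mul, ← pow_add]
    ring_nf

theorem milne_hankel_4mm1_general (hq : |q| < 1) (m : ℕ) :
    sqGen q ^ (4 * m * (m + 1)) =
      ((2 : ℝ) ^ (m * (2 * m + 1)) / ∏ i ∈ Finset.Icc 1 (2 * m), (Nat.factorial i : ℝ)) *
        Matrix.det (Matrix.of fun i j : Fin m =>
          tangentNum ((i : ℕ) + (j : ℕ) + 2) +
            4 * (-1 : ℝ) ^ ((i : ℕ) + (j : ℕ)) *
              ∑' k : ℕ, q ^ (k + 1) * ((k : ℝ) + 1) ^ (2 * (i : ℕ) + 2 * (j : ℕ) + 3) /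
                (1 - (-q) ^ (k + 1))) := by
  have hfact : ∏ i ∈ Icc 1 (2 * m), (i.factorial : ℝ) ≠ 0 :=
    prod_ne_zero_iff.2 fun i _ => by positivity
  let h (n : ℕ) : ℝ := (2 * (n + 1)).factorial * coeff (2 * (n + 1)) (ellipticP (-q))
  have hdet : (Matrix.of fun i j : Fin m => 2 * ((-1) ^ (i + j : ℕ) * h (i + j))).det =
      2 ^ m * ((∏ i ∈ Icc 1 (2 * m), (i.factorial : ℝ)) * (sqGen q ^ 4 / 4) ^ (m * (m + 1))) := by
    have hsmul := Matrix.det_smul (Matrix.of fun i j : Fin m => (-1) ^ (i + j : ℕ) * h (i + j)) 2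
    rw [det_hankel_sign, det_hankel_ellipticP hq, prod_mul_distrib, prod_range_sq_pow_succ,
      Fintype.card_fin] at hsmul
    rw [← Nat.cast_prod, ← prod_range_factorial_mul_factorial]
    push_cast
    exact hsmul
  simp only [← mul_add 2, tangentNum_add_mul_tsum hq]
  rw [hdet, div_pow, show (4 : ℝ) = 2 ^ 2 by norm_num, ← pow_mul, ← pow_mul]
  field_simp
  ring

end HankelDeterminant

/-- Milne's `4m(m+1)` squares formula in Hankel determinant form:
`□(q)^{4m(m+1)} = (2^{m(2m+1)} / Π_{i=1}^{2m} i!) ·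
  det( t_{i+j} + 4(−1)^{i+j} Σ_{k≥1} q^k k^{2i+2j−1}/(1−(−q)^k) )_{1≤i,j≤m}`. -/
theorem milne_hankel_4mm1 (q : ℝ) (hq0 : 0 < q) (hq1 : q < 1) (m : ℕ) (hm : 1 ≤ m) :
    sqGen q ^ (4 * m * (m + 1)) =
      ((2 : ℝ) ^ (m * (2 * m + 1)) / ∏ i ∈ Finset.Icc 1 (2 * m), (Nat.factorial i : ℝ)) *
        Matrix.det (Matrix.of fun i j : Fin m =>
          tangentNum ((i : ℕ) + (j : ℕ) + 2) +
            4 * (-1 : ℝ) ^ ((i : ℕ) + (j : ℕ)) *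
              ∑' k : ℕ, q ^ (k + 1) * ((k : ℝ) + 1) ^ (2 * (i : ℕ) + 2 * (j : ℕ) + 3) /
                (1 - (-q) ^ (k + 1))) := by
  exact milne_hankel_4mm1_general (by rwa [abs_of_pos hq0]) m
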